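/- If (ν, δ)_ℕ is a universal pair over the natural numbers, then (11, η(ν, δ))_ℤ is a universal pair over the integers, where η(ν, δ) = 15616 + 233856·δ + 233952·δ·(2δ+1)^(ν+1) + 467712·δ²·(2δ+1)^(ν+1). -/

import Mathlib

/-!
Let `P` represent `A` over `ℕ` in unknowns `z₁, …, z_ν`, with degree at most `δ`; here `δ ≥ 1`,
because constants represent only `∅` and `ℕ`.

**Coding.** A tuple `z` is stored in one number `g = 1 + ∑ z_i B ^ (δ + 1) ^ i`, where
`b = 2a + 2 + (4a + 3) f` is required to be a power of two up to sign, exceeds every `z_i` after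
squaring, and `B = 2 β b ^ (2δ)` for a constant power of two `β`. For a polynomial `D` whose
coefficients are those of `P` suitably rescaled and reversed, the coefficient of `B ^ L`,
`L = (δ + 1) ^ (ν + 1)`, in `(a B + g) ^ δ * D(B)` is `δ! * P(a, z)` (`coding_expand`, `kap_bigL`).
The two conditions "the digits of `g - 1` are those of some `z`" and "the coefficient vanishes"
say that certain binary digits of two explicit numbers are zero, so together they say
`S &&& T = 0` for numbers `S`, `T` that are polynomials in `a`, `f`, `g`. By Kummer's theorem on
carries this amounts to `Y ∣ (2X).choose X` for explicit `X`, `Y`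
(`central_iff_land`, `code_iff`).

**Binomial coefficients.** The divisibility, the requirement that `b` be a power of two up to sign,
and `0 < g < N` hold for some `f` iff three numbers are squares and one divides another, for
suitable integers `f, h, k, l, w, x, y, u, v` (`bridge_sound`, `bridge_complete`). The central
binomial coefficient is read off from the quotient of two Pell solutions `y_{2X+1}(A)` and
`y_{X+1}(κ)`, which is close to `(V + 1) ^ (2X) / V ^ X` (`pell_ratio`, `central_expansion`). That
a number is a prescribed `y_n(A)` takes two auxiliary unknowns (`dfi_sound`, `dfi_complete`),
that a number is `2 ^ n` a divisibility (`exp_sound`), and an inequality `0 < R` the solvability of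
a Pell equation (`pos_iff_pell`).

**One equation.** `comb_iff` merges three squareness conditions and a divisibility into a single
equation with one further unknown `n`. The unknowns are therefore the eleven
`f, g, h, k, l, w, x, y, n, u, v`. The equation has degree at most `7300 + 4600 D` with
`D = 4δ(L + M + 1)` and `M = (L + 1)(δ + 1) + 1`, which is at most `η(ν, δ)` (`degree_le_eta`).
-/


open MvPolynomial

/-- `A ⊆ ℕ` is represented, with natural-number unknowns, by the polynomial
`P ∈ ℤ[x₀, x₁, …, x_ν]`, where `x₀` is reserved for the parameter. -/
def IsDiophantineOverNWith (A : Set ℕ) {ν : ℕ} (P : MvPolynomial (Fin (ν + 1)) ℤ) : Prop :=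
  ∀ a : ℕ, a ∈ A ↔ ∃ z : Fin ν → ℕ,
    eval (Fin.cases (a : ℤ) (fun i => (z i : ℤ)) : Fin (ν + 1) → ℤ) P = 0

/-- `A ⊆ ℕ` is represented, with integer unknowns, by the polynomial
`P ∈ ℤ[x₀, x₁, …, x_ν]`, where `x₀` is reserved for the parameter. -/
def IsDiophantineOverZWith (A : Set ℕ) {ν : ℕ} (P : MvPolynomial (Fin (ν + 1)) ℤ) : Prop :=
  ∀ a : ℕ, a ∈ A ↔ ∃ z : Fin ν → ℤ,
    eval (Fin.cases (a : ℤ) z : Fin (ν + 1) → ℤ) P = 0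

/-- `A ⊆ ℕ` is Diophantine over ℕ. -/
def IsDiophantineOverN (A : Set ℕ) : Prop :=
  ∃ (ν : ℕ) (P : MvPolynomial (Fin (ν + 1)) ℤ), IsDiophantineOverNWith A P

/-- `(ν, δ)` is a universal pair over ℕ. -/
def UniversalPairN (ν δ : ℕ) : Prop :=
  ∀ A : Set ℕ, IsDiophantineOverN A →
    ∃ P : MvPolynomial (Fin (ν + 1)) ℤ, P.totalDegree ≤ δ ∧ IsDiophantineOverNWith A P

/-- `(ν, δ)` is a universal pair over ℤ. -/
def UniversalPairZ (ν δ : ℕ) : Prop :=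
  ∀ A : Set ℕ, IsDiophantineOverN A →
    ∃ P : MvPolynomial (Fin (ν + 1)) ℤ, P.totalDegree ≤ δ ∧ IsDiophantineOverZWith A P

/-- The degree bound `η(ν, δ)`. -/
def eta (ν δ : ℕ) : ℕ :=
  15616 + 233856 * δ + 233952 * δ * (2 * δ + 1) ^ (ν + 1)
    + 467712 * δ ^ 2 * (2 * δ + 1) ^ (ν + 1)

namespace UniversalPair

/-! ### One equation for three squares and a divisibility -/

/-- The product of `r ± √c₁ ± √c₂ ± √c₃` over the eight choices of signs, as a polynomial in `r`,
`c₁`, `c₂`, `c₃`. -/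
def combNorm {R : Type*} [CommRing R] (r c₁ c₂ c₃ : R) : R :=
  ((r ^ 2 + c₃ - c₁ - c₂) ^ 2 + 4 * r ^ 2 * c₃ - 4 * c₁ * c₂) ^ 2
    - 16 * (r ^ 2 + c₃ - c₁ - c₂) ^ 2 * r ^ 2 * c₃

/-- The norm `combNorm` at `r = n + T / S`, `c₁ = A₁`, `c₂ = W² A₂`, `c₃ = W⁴ A₃` with `W = 3 +
A₁² + A₂²`, multiplied by `S⁸` to clear denominators. The powers of `W` keep the three square
roots on different scales. -/
def comb {R : Type*} [CommRing R] (A₁ A₂ A₃ S T n : R) : R :=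
  combNorm (S * n + T) (S ^ 2 * A₁) (S ^ 2 * (3 + A₁ ^ 2 + A₂ ^ 2) ^ 2 * A₂)
    (S ^ 2 * (3 + A₁ ^ 2 + A₂ ^ 2) ^ 4 * A₃)

lemma isSquare_int_of_rat {m : ℤ} {t : ℚ} (h : t ^ 2 = m) : ∃ s : ℤ, s ^ 2 = m ∧ t = s := by
  have h1 : IsSquare (m : ℚ) := ⟨t, by rw [← h]; ring⟩
  obtain ⟨s, hs⟩ := Rat.isSquare_intCast_iff.mp h1
  have h2 : t ^ 2 = (s : ℚ) ^ 2 := by rw [h, hs]; push_cast; ring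
  rcases sq_eq_sq_iff_eq_or_eq_neg.mp h2 with h3 | h3
  · exact ⟨s, by rw [hs]; ring, h3⟩
  · exact ⟨-s, by rw [hs]; ring, by rw [h3]; push_cast; ring⟩

lemma abs_sq_mul (W x : ℤ) : |W ^ 2 * x| = W ^ 2 * |x| := by
  rw [abs_mul, abs_of_nonneg (sq_nonneg W)]

/-- The norm has the form `e² - 16 p² r² c₃`, so its vanishing makes `c₃` the square of `e / (4 p
r)`, unless `p r = 0`; that case is excluded for `A₃ ≠ 0` because `W⁴ A₃` is too large compared
with the other two radicands. -/
lemma comb_third {A₁ A₂ A₃ W : ℤ} {r : ℚ} (hW : 3 ≤ W) (h1 : |A₁| < W) (h2 : |A₂| < W)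
    (h : combNorm r (A₁ : ℚ) ((W : ℚ) ^ 2 * A₂) ((W : ℚ) ^ 4 * A₃) = 0) :
    ∃ t : ℚ, t ^ 2 = (W : ℚ) ^ 4 * A₃ := by
  have hWq : (3 : ℚ) ≤ W := by exact_mod_cast hW
  by_cases hA3 : A₃ = 0
  · exact ⟨0, by simp [hA3]⟩
  set c₁ : ℚ := (A₁ : ℚ)
  set c₂ : ℚ := (W : ℚ) ^ 2 * A₂ with hc2
  set c₃ : ℚ := (W : ℚ) ^ 4 * A₃ with hc3
  set p := r ^ 2 + c₃ - c₁ - c₂ with hp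
  set e := p ^ 2 + 4 * r ^ 2 * c₃ - 4 * c₁ * c₂ with he
  have hh : e ^ 2 = 16 * p ^ 2 * r ^ 2 * c₃ := by
    have : e ^ 2 - 16 * p ^ 2 * r ^ 2 * c₃ = 0 := h
    linarith
  have hW2 : 9 ≤ W ^ 2 := by nlinarith
  have hW4 : W ^ 2 * 9 ≤ W ^ 4 := by nlinarith
  have hA3' : 1 ≤ |A₃| := Int.one_le_abs hA3
  by_cases hp0 : p = 0
  · exfalso
    have he0 : e = 0 := by
      have : e ^ 2 = 0 := by rw [hh, hp0]; ring
      exact pow_eq_zero_iff (two_ne_zero) |>.mp this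
    have h5 : (c₃ - c₁) * (c₃ - c₂) = 0 := by
      have e1 : r ^ 2 = c₁ + c₂ - c₃ := by linarith
      have e2 : r ^ 2 * c₃ = c₁ * c₂ := by
        rw [he, hp0] at he0; linarith
      rw [e1] at e2
      linear_combination -e2
    rcases mul_eq_zero.mp h5 with h6 | h6
    · have : W ^ 4 * A₃ = A₁ := by
        have : (W : ℚ) ^ 4 * A₃ = A₁ := by linarith
        exact_mod_cast this
      have h7 : W ^ 4 * |A₃| = |A₁| := by
        rw [← this, show W ^ 4 * A₃ = (W ^ 2) ^ 2 * A₃ by ring, abs_sq_mul]; ring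
      nlinarith
    · have : W ^ 2 * (W ^ 2 * A₃ - A₂) = 0 := by
        have : (W : ℚ) ^ 2 * ((W : ℚ) ^ 2 * A₃ - A₂) = 0 := by rw [hc3, hc2] at h6; linarith
        exact_mod_cast this
      rcases mul_eq_zero.mp this with h8 | h8
      · nlinarith
      · have h7 : W ^ 2 * |A₃| = |A₂| := by
          rw [show A₂ = W ^ 2 * A₃ by linarith, abs_sq_mul]
        nlinarith
  by_cases hr : r = 0
  · exfalso
    have he0 : e = 0 := by
      have : e ^ 2 = 0 := by rw [hh, hr]; ring
      exact pow_eq_zero_iff (two_ne_zero) |>.mp this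
    have h5 : (W ^ 4 * A₃ - A₁ - W ^ 2 * A₂) ^ 2 = 4 * A₁ * (W ^ 2 * A₂) := by
      have : ((W : ℚ) ^ 4 * A₃ - A₁ - W ^ 2 * A₂) ^ 2 = 4 * A₁ * (W ^ 2 * A₂) := by
        rw [he, hp, hr] at he0; linarith
      exact_mod_cast this
    have h6 : W ^ 4 ≤ |W ^ 4 * A₃| := by
      rw [show W ^ 4 * A₃ = (W ^ 2) ^ 2 * A₃ by ring, abs_sq_mul]
      nlinarith [sq_nonneg (W ^ 2)]
    have h7 : |W ^ 2 * A₂| ≤ W ^ 2 * (W - 1) := by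
      rw [abs_sq_mul]; nlinarith [sq_nonneg W]
    have h8 : W ^ 4 - W ^ 2 * (W - 1) - W ≤ |W ^ 4 * A₃ - A₁ - W ^ 2 * A₂| := by
      have := abs_sub_abs_le_abs_sub (W ^ 4 * A₃) (A₁ + W ^ 2 * A₂)
      have h9 := abs_add_le A₁ (W ^ 2 * A₂)
      rw [sub_sub (W ^ 4 * A₃)]; linarith
    have h9 : |4 * A₁ * (W ^ 2 * A₂)| ≤ 4 * W * (W ^ 2 * W) := by
      rw [abs_mul, abs_mul]
      have : |(4:ℤ)| = 4 := rfl
      rw [this]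
      have : |W ^ 2 * A₂| ≤ W ^ 2 * W := by nlinarith
      gcongr
    have h10 : 2 * W ^ 2 + 1 ≤ W ^ 4 - W ^ 2 * (W - 1) - W := by
      nlinarith [sq_nonneg (W - 3), mul_nonneg (sub_nonneg.2 hW) (sq_nonneg W), mul_nonneg (mul_nonneg (sub_nonneg.2 hW) (sub_nonneg.2 hW)) (sq_nonneg W)]
    have h11 : (2 * W ^ 2 + 1) ^ 2 ≤ (W ^ 4 * A₃ - A₁ - W ^ 2 * A₂) ^ 2 := by
      rw [← sq_abs (W ^ 4 * A₃ - A₁ - W ^ 2 * A₂)]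
      gcongr
      exact h10.trans h8
    rw [h5] at h11
    have := le_abs_self (4 * A₁ * (W ^ 2 * A₂))
    nlinarith
  refine ⟨e / (4 * p * r), ?_⟩
  field_simp
  linarith

/-- Once the third radicand is a square, the vanishing factor of the norm splits off its root, and
comparison of sizes makes the first two radicands squares too. -/
lemma comb_second {A₁ A₂ W : ℤ} {r c₃ : ℚ} (hW : 3 ≤ W) (h1 : |A₁| < W)
    {t : ℚ} (ht : t ^ 2 = c₃)
    (h : combNorm r (A₁ : ℚ) ((W : ℚ) ^ 2 * A₂) c₃ = 0) :
    ∃ u v : ℚ, u ^ 2 = A₁ ∧ v ^ 2 = A₂ ∧ ∃ t' : ℚ, t' ^ 2 = c₃ ∧ r + t' + W * v = u := by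
  have hWq : (3 : ℚ) ≤ W := by exact_mod_cast hW
  set c₂ : ℚ := (W : ℚ) ^ 2 * A₂ with hc2
  have key : ∀ t : ℚ, t ^ 2 = c₃ → ((r + t) ^ 2 + c₂ - A₁) ^ 2 = 4 * (r + t) ^ 2 * c₂ →
      ∃ u v : ℚ, u ^ 2 = A₁ ∧ v ^ 2 = A₂ ∧ ∃ t' : ℚ, t' ^ 2 = c₃ ∧ r + t' + W * v = u := by
    intro t ht h
    by_cases hr : r + t = 0
    · have h3 : c₂ = A₁ := by
        rw [hr] at h
        have : (c₂ - A₁) ^ 2 = 0 := by linarith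
        have := pow_eq_zero_iff (two_ne_zero) |>.mp this
        linarith
      have h4 : W ^ 2 * A₂ = A₁ := by rw [hc2] at h3; exact_mod_cast h3
      have h5 : A₂ = 0 := by
        by_contra h5
        have h6 := Int.one_le_abs h5
        have h7 : W ^ 2 * |A₂| = |A₁| := by
          rw [← h4, abs_sq_mul]
        nlinarith
      have h6 : A₁ = 0 := by rw [← h4, h5]; ring
      exact ⟨0, 0, by simp [h6], by simp [h5], t, ht, by rw [hr]; ring⟩
    · set s := r + t
      set v : ℚ := ((s ^ 2 + c₂ - A₁) / (2 * s)) / W with hv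
      have hW0 : (W : ℚ) ≠ 0 := by linarith
      have hWv : W * v = (s ^ 2 + c₂ - A₁) / (2 * s) := by rw [hv]; field_simp
      have hv2 : (W * v) ^ 2 = c₂ := by
        rw [hWv]; field_simp; linarith
      refine ⟨s - W * v, -v, ?_, ?_, t, ht, by ring⟩
      · have : (W * v) * (2 * s) = s ^ 2 + c₂ - A₁ := by rw [hWv]; field_simp
        nlinarith
      · have : (W : ℚ) ^ 2 * (-v) ^ 2 = W ^ 2 * A₂ := by rw [← hc2, ← hv2]; ring
        exact mul_left_cancel₀ (pow_ne_zero 2 hW0) this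
  have hf : (((r + t) ^ 2 + c₂ - A₁) ^ 2 - 4 * (r + t) ^ 2 * c₂) *
      (((r + -t) ^ 2 + c₂ - A₁) ^ 2 - 4 * (r + -t) ^ 2 * c₂) = 0 := by
    rw [← h, combNorm, ← ht]; ring
  rcases mul_eq_zero.mp hf with h3 | h3
  · exact key t ht (by linarith)
  · exact key (-t) (by rw [neg_sq, ht]) (by linarith)

lemma combNorm_of_eq_add {r u v s : ℤ} (h : r = u + v + s) :
    combNorm r (u ^ 2) (v ^ 2) (s ^ 2) = 0 := by
  subst h
  simp only [combNorm]
  ring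

/-- Three squareness conditions and a divisibility are equivalent to the solvability of one
equation in one more unknown. If `A₁`, `A₂`, `A₃` are squares, the norm is a product of linear
factors in `n + T / S`, so a zero makes `T / S` an integer. -/
theorem comb_iff (A₁ A₂ A₃ S T : ℤ) (hS : S ≠ 0) :
    (∃ n : ℤ, comb A₁ A₂ A₃ S T n = 0) ↔
      (∃ s, s ^ 2 = A₁) ∧ (∃ s, s ^ 2 = A₂) ∧ (∃ s, s ^ 2 = A₃) ∧ S ∣ T := by
  set W : ℤ := 3 + A₁ ^ 2 + A₂ ^ 2 with hW
  constructor
  · rintro ⟨n, hn⟩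
    have hSq : (S : ℚ) ≠ 0 := by exact_mod_cast hS
    set r : ℚ := n + T / S with hr
    have h0 : combNorm r (A₁ : ℚ) ((W : ℚ) ^ 2 * A₂) ((W : ℚ) ^ 4 * A₃) = 0 := by
      have h1 : ((comb A₁ A₂ A₃ S T n : ℤ) : ℚ) = 0 := by exact_mod_cast hn
      have h2 : ((comb A₁ A₂ A₃ S T n : ℤ) : ℚ) =
          (S : ℚ) ^ 8 * combNorm r (A₁ : ℚ) ((W : ℚ) ^ 2 * A₂) ((W : ℚ) ^ 4 * A₃) := by
        have hr' : (S * n + T : ℚ) = S * r := by rw [hr]; field_simp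
        have hWq : (W : ℚ) = 3 + A₁ ^ 2 + A₂ ^ 2 := by rw [hW]; push_cast; ring
        simp only [comb, combNorm]
        push_cast
        rw [hr', ← hWq]
        ring
      rw [h2] at h1
      exact (mul_eq_zero.mp h1).resolve_left (pow_ne_zero _ hSq)
    have hW3 : 3 ≤ W := by nlinarith [sq_nonneg A₁, sq_nonneg A₂]
    have habs : ∀ x : ℤ, |x| ≤ x ^ 2 := fun x => by
      rw [← sq_abs]; exact Int.le_self_sq _
    have hA1 : |A₁| < W := by nlinarith [habs A₁, sq_nonneg A₂]
    have hA2 : |A₂| < W := by nlinarith [habs A₂, sq_nonneg A₁]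
    obtain ⟨t, ht⟩ := comb_third hW3 hA1 hA2 h0
    obtain ⟨u, v, hu, hv, t', ht', hsum⟩ := comb_second hW3 hA1 ht h0
    obtain ⟨u', hu', rfl⟩ := isSquare_int_of_rat hu
    obtain ⟨v', hv', rfl⟩ := isSquare_int_of_rat hv
    have hW0 : (W : ℚ) ≠ 0 := by
      have : W ≠ 0 := by linarith
      exact_mod_cast this
    have h3 : (t' / (W : ℚ) ^ 2) ^ 2 = A₃ := by
      field_simp; linarith
    obtain ⟨s', hs', hst⟩ := isSquare_int_of_rat h3
    refine ⟨⟨u', hu'⟩, ⟨v', hv'⟩, ⟨s', hs'⟩, u' - W * v' - W ^ 2 * s' - n, ?_⟩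
    have h4 : t' = W ^ 2 * s' := by rw [← hst]; field_simp
    have : (T : ℚ) = S * (u' - W * v' - W ^ 2 * s' - n) := by
      rw [h4, hr] at hsum
      field_simp at hsum
      linarith
    exact_mod_cast this
  · rintro ⟨⟨u, hu⟩, ⟨v, hv⟩, ⟨s, hs⟩, ⟨q, hq⟩⟩
    refine ⟨- q + u + W * v + W ^ 2 * s, ?_⟩
    rw [comb, ← hW, ← hu, ← hv, ← hs, show S ^ 2 * u ^ 2 = (S * u) ^ 2 by ring,
      show S ^ 2 * W ^ 2 * v ^ 2 = (S * W * v) ^ 2 by ring,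
      show S ^ 2 * W ^ 4 * s ^ 2 = (S * W ^ 2 * s) ^ 2 by ring, hq]
    exact combNorm_of_eq_add (by ring)

/-! ### Positivity as a square condition -/

/-- Up to sign, every nonzero integer is `2 ^ e` times an odd number, hence of the form `(2u +
1)(3v + 1)`, a product that never vanishes: one of `± 2 ^ e` is `1` mod `3`. -/
lemma exists_nonzero_param {p : ℤ} (hp : p ≠ 0) :
    ∃ u v : ℤ, ((2 * u + 1) * (3 * v + 1)) ^ 2 = p ^ 2 := by
  obtain ⟨i, o, ho, hpo⟩ := Nat.exists_eq_two_pow_mul_odd (Int.natAbs_ne_zero.mpr hp)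
  obtain ⟨u, rfl⟩ := ho
  have h3 : ∃ v : ℤ, (3 * v + 1) ^ 2 = (2 ^ i) ^ 2 := by
    induction i generalizing p with
    | zero => exact ⟨0, by norm_num⟩
    | succ i ih =>
      obtain ⟨v, hv⟩ := ih (p := 2 ^ i * (2 * u + 1)) (by positivity) (by
        rw [Int.natAbs_mul, Int.natAbs_pow]
        congr 1)
      exact ⟨-(2 * v + 1), by rw [pow_succ (2 : ℤ), mul_pow _ (2 : ℤ), ← hv]; ring⟩
  obtain ⟨v, hv⟩ := h3
  refine ⟨u, v, ?_⟩
  rw [mul_pow, hv, ← Int.natAbs_sq p, hpo]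
  push_cast
  ring

/-- Since `4R - 2` is never a square, the Pell equation `s² = (4R - 2) p² + 1` has a solution with
`p ≠ 0` exactly when `4R - 2 > 0`. -/
theorem pos_iff_pell (R : ℤ) :
    0 < R ↔ ∃ u v s : ℤ, s ^ 2 = (4 * R - 2) * ((2 * u + 1) * (3 * v + 1)) ^ 2 + 1 := by
  constructor
  · intro hR
    have hns : ¬ IsSquare (4 * R - 2) := by
      rintro ⟨r, hr⟩
      rcases Int.even_or_odd' r with ⟨k, rfl | rfl⟩
      · have : 2 * (R - k * k) = 1 := by linarith
        omega
      · have : 4 * (R - k * k - k) = 3 := by linarith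
        omega
    obtain ⟨s, p, hsp, hp⟩ := Pell.exists_of_not_isSquare (by linarith : 0 < 4 * R - 2) hns
    obtain ⟨u, v, huv⟩ := exists_nonzero_param hp
    exact ⟨u, v, s, by rw [huv]; linarith⟩
  · rintro ⟨u, v, s, hs⟩
    by_contra hR
    have hp : (2 * u + 1) * (3 * v + 1) ≠ 0 := mul_ne_zero (by omega) (by omega)
    have : 0 < ((2 * u + 1) * (3 * v + 1)) ^ 2 := by positivity
    nlinarith [sq_nonneg s]

/-! ### A Pell equation with two auxiliary unknowns -/

section
open Pell

lemma pell_id {a : ℕ} (a1 : 1 < a) (n : ℕ) :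
    (xn a1 n : ℤ) ^ 2 = ((a : ℤ) ^ 2 - 1) * (yn a1 n : ℤ) ^ 2 + 1 := by
  have h1 := pell_eqz a1 n
  rw [dz_val] at h1
  simp only [xz, yz, az] at h1
  linarith

lemma pell_sol {a : ℕ} (a1 : 1 < a) {y s : ℤ} (h : s ^ 2 = ((a : ℤ) ^ 2 - 1) * y ^ 2 + 1) :
    ∃ n, s.natAbs = xn a1 n ∧ y.natAbs = yn a1 n := by
  apply eq_pell a1
  have h1 : s.natAbs * s.natAbs = (a * a - 1) * y.natAbs * y.natAbs + 1 := by
    zify [Nat.one_le_iff_ne_zero.mpr (by positivity : a * a ≠ 0)]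
    rw [mul_assoc, abs_mul_abs_self, abs_mul_abs_self]
    linarith
  have : s.natAbs * s.natAbs - (a * a - 1) * y.natAbs * y.natAbs = 1 := by omega
  exact this

lemma xn_two_mul {a : ℕ} (a1 : 1 < a) (n : ℕ) :
    (xn a1 (2 * n) : ℤ) = 2 * ((a : ℤ) ^ 2 - 1) * (yn a1 n : ℤ) ^ 2 + 1 := by
  have h1 := xn_add a1 n n
  have h2 : (xn a1 (2 * n) : ℤ) =
      (xn a1 n : ℤ) * xn a1 n + ((a : ℤ) * a - 1) * yn a1 n * yn a1 n := by
    rw [two_mul, h1]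
    push_cast
    rw [dz_val]
    rfl
  rw [h2]
  linear_combination pell_id a1 n

lemma yn_modEq_int {a : ℕ} (a1 : 1 < a) (n : ℕ) : (a - 1 : ℤ) ∣ yn a1 n - n := by
  have h := (yn_modEq_a_sub_one a1 n).symm
  have := Nat.modEq_iff_dvd.mp h
  rwa [Nat.cast_sub a1.le, Nat.cast_one] at this

section DFI
variable {R : Type*} [CommRing R]

/-- The Pell discriminant of `C`: `D` is a square iff `|C|` is
some `y_n(a)`. -/
def pD (a C : R) : R := (a ^ 2 - 1) * C ^ 2 + 1
/-- A multiple of `2C²D`, with the auxiliary unknown `x` as cofactor. -/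
def pE (a C x : R) : R := 2 * C ^ 2 * pD a C * x
/-- `F` is a square iff `|E|` is some `y_m(a)`. -/
def pF (a C x : R) : R := (a ^ 2 - 1) * pE a C x ^ 2 + 1
/-- A second Pell parameter, congruent to `a` mod `F` and to `1` mod `2C`. -/
def pG (a C x : R) : R := a + pF a C x * (pF a C x - a)
/-- A candidate Pell solution for the parameter `G`, congruent to `C` mod `F` and to `B` mod `2C`.
-/
def pH (a B C x y : R) : R := C + pF a C x * (B - C + 2 * C * y)
/-- `I` is a square iff `|H|` is some `y_j(G)`. -/
def pI (a B C x y : R) : R := (pG a C x ^ 2 - 1) * pH a B C x y ^ 2 + 1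
/-- The product of the pairwise coprime numbers `D`, `F`, `I`: for nonnegative factors it is a
square iff each of them is. -/
def pDFI (a B C x y : R) : R := pD a C * pF a C x * pI a B C x y
end DFI

lemma square_of_mul {A B s : ℤ} (hA : 0 ≤ A) (hc : IsCoprime A B) (h : s ^ 2 = A * B) :
    ∃ t, t ^ 2 = A := by
  obtain ⟨t, ht | ht⟩ := Int.sq_of_isCoprime hc h.symm
  · exact ⟨t, ht.symm⟩
  · exact ⟨0, by nlinarith [sq_nonneg t]⟩

section
variable {a : ℕ} {B C x y : ℤ}

lemma dvd_pE : 2 * C ∣ pE (a : ℤ) C x := ⟨C * pD (a : ℤ) C * x, by rw [pE]; ring⟩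

lemma pF_sub_one_dvd : pE (a : ℤ) C x ∣ pF (a : ℤ) C x - 1 :=
  ⟨((a : ℤ) ^ 2 - 1) * pE (a : ℤ) C x, by rw [pF]; ring⟩

lemma pG_sub_one : pG (a : ℤ) C x - 1 = (pF (a : ℤ) C x - 1) * (pF (a : ℤ) C x + 1 - a) := by
  rw [pG]; ring

lemma pD_dvd_pE : pD (a : ℤ) C ∣ pE (a : ℤ) C x := ⟨2 * C ^ 2 * x, by rw [pE]; ring⟩

lemma coprime_D_F : IsCoprime (pD (a : ℤ) C) (pF (a : ℤ) C x) := by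
  obtain ⟨k, hk⟩ := (pD_dvd_pE (a := a) (C := C) (x := x)).trans pF_sub_one_dvd
  exact ⟨-k, 1, by linear_combination hk⟩

lemma coprime_D_I : IsCoprime (pD (a : ℤ) C) (pI (a : ℤ) B C x y) := by
  obtain ⟨k, hk⟩ := (pD_dvd_pE (a := a) (C := C) (x := x)).trans pF_sub_one_dvd
  refine ⟨-(k * (pF (a : ℤ) C x + 1 - a) * (pG (a : ℤ) C x + 1) * pH (a : ℤ) B C x y ^ 2), 1, ?_⟩
  have := pG_sub_one (a := a) (C := C) (x := x)
  rw [hk] at this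
  rw [pI]
  linear_combination (pG (a : ℤ) C x + 1) * pH (a : ℤ) B C x y ^ 2 * this

lemma coprime_F_I : IsCoprime (pF (a : ℤ) C x) (pI (a : ℤ) B C x y) := by
  have h1 : ∃ k, pI (a : ℤ) B C x y = pD (a : ℤ) C + pF (a : ℤ) C x * k := by
    refine ⟨((pF (a : ℤ) C x - a) * (2 * a + pF (a : ℤ) C x * (pF (a : ℤ) C x - a))) *
      pH (a : ℤ) B C x y ^ 2 + ((a : ℤ) ^ 2 - 1) * ((B - C + 2 * C * y) *
        (2 * C + pF (a : ℤ) C x * (B - C + 2 * C * y))), ?_⟩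
    have hH : pH (a : ℤ) B C x y = C + pF (a : ℤ) C x * (B - C + 2 * C * y) := rfl
    rw [pI, pG, pD]
    generalize pF (a : ℤ) C x = F at *
    generalize (B - C + 2 * C * y) = Z at *
    rw [hH]
    ring
  obtain ⟨k, hk⟩ := h1
  obtain ⟨u, v, huv⟩ := coprime_D_F (a := a) (C := C) (x := x)
  exact ⟨v - u * k, u, by rw [hk]; linear_combination huv⟩

/-- `D`, `F` and `I` are pairwise coprime and nonnegative, so each is a square as soon as the
product is. -/
lemma square_DFI (a1 : 1 < a) {s : ℤ} (h : s ^ 2 = pDFI (a : ℤ) B C x y)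
    (hG : 1 ≤ pG (a : ℤ) C x) :
    (∃ t, t ^ 2 = pD (a : ℤ) C) ∧ (∃ t, t ^ 2 = pF (a : ℤ) C x) ∧
      ∃ t, t ^ 2 = pI (a : ℤ) B C x y := by
  have ha : (1 : ℤ) ≤ (a : ℤ) ^ 2 := by
    have : (1 : ℤ) < a := by exact_mod_cast a1
    nlinarith
  have hD : 0 ≤ pD (a : ℤ) C := by
    rw [pD]; nlinarith [mul_nonneg (sub_nonneg.2 ha) (sq_nonneg C)]
  have hF : 0 ≤ pF (a : ℤ) C x := by
    rw [pF]; nlinarith [mul_nonneg (sub_nonneg.2 ha) (sq_nonneg (pE (a : ℤ) C x))]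
  have hI : 0 ≤ pI (a : ℤ) B C x y := by
    have hG' : (0 : ℤ) ≤ pG (a : ℤ) C x ^ 2 - 1 := by nlinarith
    rw [pI]; nlinarith [mul_nonneg hG' (sq_nonneg (pH (a : ℤ) B C x y))]
  rw [pDFI] at h
  refine ⟨square_of_mul hD (coprime_D_F.mul_right coprime_D_I) (by rw [h, mul_assoc]),
    square_of_mul hF (coprime_D_F.symm.mul_right coprime_F_I) (by rw [h]; ring),
    square_of_mul hI (coprime_D_I.symm.mul_right coprime_F_I.symm) (by rw [h]; ring)⟩

lemma lt_pF (a1 : 1 < a) (hE : pE (a : ℤ) C x ≠ 0) : (a : ℤ) < pF (a : ℤ) C x := by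
  have h1 : (2 : ℤ) ≤ a := by exact_mod_cast a1
  have h2 : 1 ≤ pE (a : ℤ) C x ^ 2 := by
    have : 0 < pE (a : ℤ) C x ^ 2 := by positivity
    linarith
  rw [pF]
  nlinarith [mul_nonneg (by nlinarith : (0 : ℤ) ≤ (a : ℤ) ^ 2 - 1) (sub_nonneg.2 h2)]

lemma one_lt_pG (a1 : 1 < a) (hE : pE (a : ℤ) C x ≠ 0) : 1 < pG (a : ℤ) C x := by
  have h1 := lt_pF a1 hE
  have h2 : (2 : ℤ) ≤ a := by exact_mod_cast a1
  rw [pG]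
  nlinarith

lemma dvd_pG_sub_one : 2 * C ∣ pG (a : ℤ) C x - 1 := by
  rw [pG_sub_one]
  exact ((dvd_pE (a := a) (x := x)).trans pF_sub_one_dvd).mul_right _

lemma dvd_pH_sub_B : 2 * C ∣ pH (a : ℤ) B C x y - B := by
  obtain ⟨k, hk⟩ := (dvd_pE (a := a) (x := x) (C := C)).trans pF_sub_one_dvd
  refine ⟨k * (B - C) + pF (a : ℤ) C x * y, ?_⟩
  rw [pH]
  linear_combination (B - C) * hk

lemma pell_congr {b : ℕ} (a1 : 1 < a) (b1 : 1 < b) {F : ℤ} (h : F ∣ (b : ℤ) - a) (n : ℕ) :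
    F ∣ (yn b1 n : ℤ) - yn a1 n := by
  have h1 : a ≡ b [MOD F.natAbs] := Nat.modEq_iff_dvd.mpr (Int.natAbs_dvd.mpr h)
  have h2 := (xy_modEq_of_modEq a1 b1 h1 n).2
  exact Int.natAbs_dvd.mp (Nat.modEq_iff_dvd.mp h2)

/-- The number `y_n(a)` satisfies the squareness condition: `x` comes from a nontrivial solution
of the Pell equation with coefficient `(a² - 1)(2C²D)²`, and `y` makes `H` equal to `y_n(G)`,
which has the residues required of `H` modulo `F` and `2C`. -/
theorem dfi_complete (a1 : 1 < a) (n : ℕ) (hn : 0 < n) :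
    ∃ x y : ℤ, x ≠ 0 ∧ ∃ s : ℤ, s ^ 2 = pDFI (a : ℤ) n (yn a1 n) x y := by
  set C : ℤ := (yn a1 n : ℤ) with hC
  have hCpos : 0 < C := by
    have := yn_ge_n a1 n
    omega
  have ha : (2 : ℤ) ≤ a := by exact_mod_cast a1
  have hDpos : 0 < pD (a : ℤ) C := by
    rw [pD]; nlinarith [mul_nonneg (by nlinarith : (0 : ℤ) ≤ (a : ℤ) ^ 2 - 1) (sq_nonneg C)]
  set k : ℤ := 2 * C ^ 2 * pD (a : ℤ) C with hk
  have hkpos : 0 < k := by positivity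
  have hns : ¬ IsSquare (((a : ℤ) ^ 2 - 1) * k ^ 2) := by
    rintro ⟨r, hr⟩
    have h1 : r.natAbs ^ 2 = (a * a - 1) * k.natAbs ^ 2 := by
      zify [Nat.one_le_iff_ne_zero.mpr (by positivity : a * a ≠ 0)]
      rw [sq_abs, sq_abs]; linarith
    have h2 : k.natAbs ∣ r.natAbs := by
      rw [← Nat.pow_dvd_pow_iff two_ne_zero]
      exact ⟨_, by rw [h1]; ring⟩
    obtain ⟨t, ht⟩ := Int.natAbs_dvd_natAbs.mp h2
    have h3 : t ^ 2 = (a : ℤ) ^ 2 - 1 := by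
      have : k ^ 2 * t ^ 2 = k ^ 2 * ((a : ℤ) ^ 2 - 1) := by
        rw [← mul_pow, ← ht]; linarith
      exact mul_left_cancel₀ (by positivity) this
    have h4 : |t| < a := by
      apply lt_of_pow_lt_pow_left₀ 2 (by positivity); rw [sq_abs]; linarith
    have h5 : (a : ℤ) - 1 < |t| := by
      apply lt_of_pow_lt_pow_left₀ 2 (by positivity); rw [sq_abs]; nlinarith
    omega
  obtain ⟨s, x, hsx, hx⟩ := Pell.exists_of_not_isSquare
    (mul_pos (by nlinarith) (by positivity) : 0 < ((a : ℤ) ^ 2 - 1) * k ^ 2) hns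
  have hEk : pE (a : ℤ) C x = k * x := rfl
  have hE : pE (a : ℤ) C x ≠ 0 := by rw [hEk]; positivity
  have hF : s ^ 2 = pF (a : ℤ) C x := by rw [pF, hEk]; linarith
  have hG := one_lt_pG a1 hE
  obtain ⟨g, hg⟩ := Int.eq_ofNat_of_zero_le (by linarith : 0 ≤ pG (a : ℤ) C x)
  have g1 : 1 < g := by rw [hg] at hG; exact_mod_cast hG
  have hFG : pF (a : ℤ) C x ∣ (g : ℤ) - a :=
    ⟨pF (a : ℤ) C x - a, by rw [← hg, pG]; ring⟩
  obtain ⟨t, ht⟩ := pell_congr a1 g1 hFG n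
  have h2C : 2 * C ∣ (yn g1 n : ℤ) - n := by
    refine Dvd.dvd.trans ?_ (yn_modEq_int g1 n)
    rw [← hg]; exact dvd_pG_sub_one
  obtain ⟨z, hz⟩ := h2C
  obtain ⟨w, hw⟩ := (dvd_pE (a := a) (x := x) (C := C)).trans pF_sub_one_dvd
  have hty : t = n - C + 2 * C * (z - w * t) := by
    linear_combination hz - ht - t * hw
  refine ⟨x, z - w * t, hx, xn a1 n * s * xn g1 n, ?_⟩
  have hH : pH (a : ℤ) n C x (z - w * t) = yn g1 n := by
    rw [pH, ← hty]; linarith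
  rw [pDFI, pI, hH, hg, ← pell_id g1, ← hF, pD, hC, ← pell_id a1]
  ring

/-- The squareness condition forces `C = y_B(a)`. It makes `|C|`, `|E|`, `|H|` Pell solutions with
indices `n`, `m`, `j`; the divisibility `C² ∣ E` gives `C ∣ m`, the two congruences for `H` give
`j ≡ ±n` and `j ≡ ±B` mod `2C`, hence `n ≡ ±B`. -/
theorem dfi_sound (a1 : 1 < a) {B : ℕ} {h s : ℤ} (hB : 2 ≤ B) (hBa : 2 * B + 1 < a)
    (hC : C = B + h * (a - 1)) (hx : x ≠ 0) (hs : s ^ 2 = pDFI (a : ℤ) B C x y) :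
    C = yn a1 B := by
  have ha : (2 * (B : ℤ) + 1 < a) := by exact_mod_cast hBa
  have hB' : (2 : ℤ) ≤ B := by exact_mod_cast hB
  have hC0 : C ≠ 0 := by
    rintro rfl
    rcases lt_trichotomy h 0 with h1 | h1 | h1 <;> nlinarith
  have hD0 : pD (a : ℤ) C ≠ 0 := by
    have : 0 ≤ ((a : ℤ) ^ 2 - 1) * C ^ 2 := mul_nonneg (by nlinarith) (sq_nonneg C)
    rw [pD]; positivity
  have hE : pE (a : ℤ) C x ≠ 0 := by rw [pE]; positivity
  have hG := one_lt_pG a1 hE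
  obtain ⟨⟨d, hd⟩, ⟨f, hf⟩, ⟨i, hi⟩⟩ := square_DFI a1 hs hG.le
  obtain ⟨n, -, hn⟩ := pell_sol a1 hd
  obtain ⟨m, hfm, hm⟩ := pell_sol a1 hf
  obtain ⟨g, hg⟩ := Int.eq_ofNat_of_zero_le (by linarith : 0 ≤ pG (a : ℤ) C x)
  have g1 : 1 < g := by rw [hg] at hG; exact_mod_cast hG
  rw [pI, hg] at hi
  obtain ⟨j, -, hj⟩ := pell_sol g1 hi
  have hFG : pF (a : ℤ) C x ∣ (g : ℤ) - a :=
    ⟨pF (a : ℤ) C x - a, by rw [← hg, pG]; ring⟩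
  have hn0 : 0 < n := by
    rcases Nat.eq_zero_or_pos n with rfl | h1
    · simp at hn; exact absurd hn hC0
    · exact h1
  have hm0 : 0 < m := by
    rcases Nat.eq_zero_or_pos m with rfl | h1
    · simp at hm; exact absurd hm hE
    · exact h1
  -- the first step down: `y_n² ∣ y_m` forces `y_n ∣ m`
  have hCm : yn a1 n ∣ m := by
    apply dvd_of_ysq_dvd
    rw [← hn, ← hm, ← Int.natAbs_mul]
    exact Int.natAbs_dvd_natAbs.mpr ⟨2 * pD (a : ℤ) C * x, by rw [pE]; ring⟩
  have hnm : 2 * n ≤ m := by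
    have h1 : 2 * yn a1 n ∣ yn a1 m := by
      rw [← hn, ← hm]
      have := Int.natAbs_dvd_natAbs.mpr (dvd_pE (a := a) (C := C) (x := x))
      rwa [Int.natAbs_mul] at this
    have h2 : n ∣ m := (y_dvd_iff a1 n m).mp ((Dvd.intro_left 2 rfl).trans h1)
    obtain ⟨k, rfl⟩ := h2
    rcases k with _ | _ | k
    · simp at hm0
    · have h3 := Nat.le_of_dvd (by simpa using (strictMono_y a1 hn0 : yn a1 0 < yn a1 n))
        (by simpa using h1)
      have h4 : 0 < yn a1 n := by simpa using (strictMono_y a1 hn0 : yn a1 0 < yn a1 n)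
      omega
    · nlinarith
  -- `x_{2j} ≡ x_{2n}` modulo `x_m` gives `j ≡ ±n` modulo `2 m`, once `2 n ≤ m`
  have hHC : pF (a : ℤ) C x ∣ pH (a : ℤ) B C x y - C :=
    ⟨B - C + 2 * C * y, by rw [pH]; ring⟩
  have hsq : pF (a : ℤ) C x ∣ (yn a1 j : ℤ) ^ 2 - (yn a1 n : ℤ) ^ 2 := by
    have h1 : ((yn g1 j : ℤ)) ^ 2 = pH (a : ℤ) B C x y ^ 2 := by
      rw [← hj, Int.natAbs_sq]
    have h2 : ((yn a1 n : ℤ)) ^ 2 = C ^ 2 := by rw [← hn, Int.natAbs_sq]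
    obtain ⟨u, hu⟩ := pell_congr a1 g1 hFG j
    obtain ⟨v, hv⟩ := hHC
    refine ⟨v * (pH (a : ℤ) B C x y + C) - u * (yn g1 j + yn a1 j), ?_⟩
    linear_combination (pH (a : ℤ) B C x y + C) * hv - (yn g1 j + yn a1 j : ℤ) * hu + h1 - h2
  have hxx : xn a1 (2 * j) ≡ xn a1 (2 * n) [MOD xn a1 m] := by
    apply Nat.ModEq.symm
    rw [Nat.modEq_iff_dvd, xn_two_mul, xn_two_mul]
    have h1 : (xn a1 m : ℤ) ∣ pF (a : ℤ) C x := by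
      rw [← hf, ← hfm, ← Int.natAbs_sq]; exact Dvd.intro_left _ (sq _).symm
    refine h1.trans ?_
    obtain ⟨v, hv⟩ := hsq
    exact ⟨2 * ((a : ℤ) ^ 2 - 1) * v, by linear_combination 2 * ((a : ℤ) ^ 2 - 1) * hv⟩
  have hCdvd : C ∣ (m : ℤ) := by
    rw [← Int.natAbs_dvd, hn]; exact_mod_cast hCm
  have hjn : 2 * C ∣ (j : ℤ) - n ∨ 2 * C ∣ (j : ℤ) + n := by
    obtain ⟨q, hq⟩ := hCdvd
    rcases modEq_of_xn_modEq a1 (by omega) hnm hxx with h1 | h1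
    · left
      obtain ⟨k, hk⟩ := Nat.modEq_iff_dvd.mp h1.symm
      push_cast at hk
      exact ⟨q * k, by rw [hq] at hk; linarith⟩
    · right
      obtain ⟨k, hk⟩ := Nat.modEq_iff_dvd.mp h1.symm
      push_cast at hk
      exact ⟨q * k, by rw [hq] at hk; linarith⟩
  have hBj : 2 * C ∣ (j : ℤ) - B ∨ 2 * C ∣ (j : ℤ) + B := by
    have h1 : 2 * C ∣ (yn g1 j : ℤ) - j := by
      refine Dvd.dvd.trans ?_ (yn_modEq_int g1 j)
      rw [← hg]; exact dvd_pG_sub_one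
    have h2 := dvd_pH_sub_B (a := a) (B := B) (C := C) (x := x) (y := y)
    have h3 : (yn g1 j : ℤ) = |pH (a : ℤ) B C x y| := by rw [← hj]; simp
    rcases abs_choice (pH (a : ℤ) B C x y) with h4 | h4
    · left
      have := dvd_sub h2 h1
      rwa [h3, h4, show pH (a : ℤ) B C x y - B - (pH (a : ℤ) B C x y - j) = j - B by ring] at this
    · right
      have := dvd_add h2 h1
      rw [h3, h4, show pH (a : ℤ) B C x y - B + (-pH (a : ℤ) B C x y - j) = -(j + B) by ring]
        at this
      exact (dvd_neg.mp this)
  -- The index `n` of `C` is congruent to `B` or `-B` modulo `2 * C`; as `n ≤ |C|` and `B < |C|`,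
  -- this leaves only `n = B`.
  have hBn : 2 * C ∣ (B : ℤ) - n ∨ 2 * C ∣ (B : ℤ) + n := by
    rcases hjn with h1 | h1 <;> rcases hBj with h2 | h2
    · left; have := dvd_sub h1 h2; rwa [show (j : ℤ) - n - (j - B) = B - n by ring] at this
    · right; have := dvd_sub h2 h1; rwa [show (j : ℤ) + B - (j - n) = B + n by ring] at this
    · right; have := dvd_sub h1 h2; rwa [show (j : ℤ) + n - (j - B) = B + n by ring] at this
    · left; have := dvd_sub h2 h1; rwa [show (j : ℤ) + B - (j + n) = B - n by ring] at this
  have hnC : (n : ℤ) ≤ |C| := by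
    rw [Int.abs_eq_natAbs, hn]; exact_mod_cast yn_ge_n a1 n
  have hBC : (B : ℤ) < |C| := by
    rcases lt_trichotomy h 0 with h1 | h1 | h1
    · have : C ≤ B - (a - 1) := by nlinarith
      rw [abs_of_neg (by linarith)]; linarith
    · exfalso
      rw [h1, zero_mul, add_zero] at hC
      have h2 : yn a1 n = B := by rw [← hn, hC]; simp
      rcases n with _ | _ | n
      · omega
      · simp at h2; omega
      · have h3 : yn a1 2 ≤ yn a1 (n + 1 + 1) := (strictMono_y a1).monotone (by omega)
        have h4 : yn a1 2 = a + a := by simp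
        omega
    · have : B + (a - 1) ≤ C := by nlinarith
      rw [abs_of_pos (by linarith)]; linarith
  have hBeq : n = B := by
    rcases hBn with h1 | h1
    · rw [← abs_dvd, abs_mul] at h1
      have := Int.eq_zero_of_abs_lt_dvd h1 (by
        rw [abs_lt]; simp only [abs_two]; constructor <;> linarith)
      omega
    · rw [← abs_dvd, abs_mul] at h1
      have := Int.eq_zero_of_abs_lt_dvd h1 (by
        rw [abs_lt]; simp only [abs_two]; constructor <;> linarith)
      omega
  subst hBeq
  rcases Int.natAbs_eq C with h1 | h1
  · rw [h1, hn]
  · exfalso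
    rw [hn] at h1
    have h2 : (a - 1 : ℤ) ∣ 2 * n := by
      obtain ⟨k, hk⟩ := yn_modEq_int a1 n
      exact ⟨-(h + k), by linear_combination -hk - hC + h1⟩
    have := Int.eq_zero_of_abs_lt_dvd h2 (by rw [abs_of_nonneg (by positivity)]; linarith)
    omega
end
end

/-! ### Growth of Pell solutions -/

section
open Pell

lemma yn_rec {a : ℕ} (a1 : 1 < a) (n : ℕ) :
    (yn a1 (n + 2) : ℤ) = 2 * a * yn a1 (n + 1) - yn a1 n := by
  have := yn_succ_succ a1 n
  have h2 : (yn a1 (n + 2) : ℤ) + yn a1 n = 2 * a * yn a1 (n + 1) := by exact_mod_cast this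
  linarith

lemma yn_le_pow {a : ℕ} (a1 : 1 < a) (m : ℕ) : yn a1 (m + 1) ≤ (2 * a) ^ m := by
  induction m with
  | zero => simp
  | succ m ih =>
    have := yn_succ_succ a1 m
    calc yn a1 (m + 2) ≤ 2 * a * yn a1 (m + 1) := by omega
      _ ≤ 2 * a * (2 * a) ^ m := Nat.mul_le_mul_left _ ih
      _ = (2 * a) ^ (m + 1) := by ring

lemma pow_le_yn {a : ℕ} (a1 : 1 < a) (m : ℕ) : (2 * (a : ℤ) - 1) ^ m ≤ yn a1 (m + 1) := by
  induction m with
  | zero => simp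
  | succ m ih =>
    have h1 := yn_rec a1 m
    have h2 : (yn a1 m : ℤ) ≤ yn a1 (m + 1) := by
      exact_mod_cast (strictMono_y a1).monotone (Nat.le_succ m)
    have h3 : (2 : ℤ) ≤ a := by exact_mod_cast a1
    rw [h1, pow_succ]
    nlinarith [mul_le_mul_of_nonneg_right ih (by linarith : (0 : ℤ) ≤ 2 * a - 1)]

/-- The Pell solution for `a ≡ 5 / 4` behaves like powers of `2`. -/
lemma pell_two_pow {a : ℕ} (a1 : 1 < a) (n : ℕ) :
    (4 * (a : ℤ) - 5) ∣ 3 * 2 ^ n * yn a1 n - 2 * (4 ^ n - 1) := by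
  induction n using Nat.twoStepInduction with
  | zero => simp
  | one => simp
  | more n ih1 ih2 =>
    obtain ⟨r, hr⟩ := ih1
    obtain ⟨s, hs⟩ := ih2
    rw [yn_rec a1 n]
    refine ⟨3 * 2 ^ (n + 1) * yn a1 (n + 1) + 5 * s - 4 * r, ?_⟩
    simp only [pow_succ] at *
    linear_combination 5 * hs - 4 * hr

/-- Both `W` and `2 ^ n` satisfy `3 W y ≡ 2 (W² - 1)` modulo `4a - 5` with `y = y_n(a)`;
eliminating `y` gives `(W - 2 ^ n) (2 ^ n W + 1) ≡ 0`, and for large `a` this is an equality. -/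
lemma exp_sound {a : ℕ} (a1 : 1 < a) {n : ℕ} (hn : 1 ≤ n) {W : ℤ} (hW : W ≠ 0)
    (h : (4 * (a : ℤ) - 5) ∣ 3 * W * yn a1 n - 2 * (W ^ 2 - 1))
    (ha : 2 * (4 ^ n * W ^ 2) + 2 < (a : ℤ)) : W = 2 ^ n := by
  obtain ⟨r, hr⟩ := h
  obtain ⟨s, hs⟩ := pell_two_pow a1 n
  have h4 : (4 : ℤ) ^ n = (2 ^ n) ^ 2 := by rw [← pow_mul, mul_comm n 2, pow_mul]; norm_num
  have h5 : (4 * (a : ℤ) - 5) ∣ 2 * ((2 ^ n - W) * (1 + 2 ^ n * W)) := by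
    refine ⟨2 ^ n * r - W * s, ?_⟩
    rw [h4] at hs
    linear_combination 2 ^ n * hr - W * hs
  have hE : (2 : ℤ) ≤ 2 ^ n := by
    calc (2 : ℤ) = 2 ^ 1 := by norm_num
      _ ≤ 2 ^ n := pow_le_pow_right₀ (by norm_num) hn
  rw [h4] at ha
  obtain ⟨m, hm⟩ : ∃ m, n = m + 1 := ⟨n - 1, by omega⟩
  have hodd : (1 : ℤ) + 2 ^ n * W ≠ 0 := by
    rw [hm, pow_succ]
    intro h0
    have : (2 : ℤ) * (2 ^ m * W) = -1 := by linarith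
    omega
  generalize (2 : ℤ) ^ n = E at *
  have hW1 : 1 ≤ |W| := Int.one_le_abs hW
  have e1 : |E - W| ≤ 2 * (E * |W|) := by
    have := abs_sub E W
    rw [abs_of_nonneg (by linarith : 0 ≤ E)] at this
    nlinarith
  have e2 : |1 + E * W| ≤ 2 * (E * |W|) := by
    have := abs_add_le 1 (E * W)
    rw [abs_mul, abs_of_nonneg (by linarith : 0 ≤ E), abs_one] at this
    nlinarith
  have e3 : |2 * ((E - W) * (1 + E * W))| ≤ 8 * (E ^ 2 * W ^ 2) := by
    rw [abs_mul, abs_mul, abs_two, ← sq_abs W]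
    have := mul_le_mul e1 e2 (abs_nonneg _) (by positivity)
    nlinarith
  have h6 := Int.eq_zero_of_abs_lt_dvd h5 (by linarith)
  have h7 : E - W = 0 := by
    rcases mul_eq_zero.mp h6 with h | h
    · norm_num at h
    · exact (mul_eq_zero.mp h).resolve_right hodd
  linarith

/-- Comparison of the quotient of two Pell solutions with `(V + 1) ^ (2 * X) / V ^ X`. -/
lemma pell_ratio {a κ q V X : ℕ} (a1 : 1 < a) (κ1 : 1 < κ) (ha : a = q * (V + 1))
    (hκ : κ = 2 * q ^ 2 * V) (hq : 1 ≤ q) (hV : 1 ≤ V) (hX : X < a) :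
    (1 - (X : ℝ) / a) * ((V + 1) ^ (2 * X) / V ^ X) * yn κ1 (X + 1) ≤ yn a1 (2 * X + 1) ∧
    (1 - (X : ℝ) / a) * yn a1 (2 * X + 1) ≤ (V + 1) ^ (2 * X) / V ^ X * yn κ1 (X + 1) := by
  have hVr : (1 : ℝ) ≤ V := by exact_mod_cast hV
  have hqr : (1 : ℝ) ≤ q := by exact_mod_cast hq
  have har : (1 : ℝ) < a := by exact_mod_cast a1
  have hκr : (1 : ℝ) < κ := by exact_mod_cast κ1
  have hXr : (X : ℝ) < a := by exact_mod_cast hX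
  have ha' : (a : ℝ) = q * (V + 1) := by exact_mod_cast ha
  have hκ' : (κ : ℝ) = 2 * q ^ 2 * V := by exact_mod_cast hκ
  have hρ : ((V : ℝ) + 1) ^ (2 * X) / V ^ X * (2 * κ) ^ X = (2 * a) ^ (2 * X) := by
    rw [pow_mul, pow_mul, ← div_pow, ← mul_pow, ha', hκ']
    congr 1
    field_simp
  have hρ0 : 0 < ((V : ℝ) + 1) ^ (2 * X) / V ^ X := by positivity
  set ρ := ((V : ℝ) + 1) ^ (2 * X) / V ^ X
  have hε : 0 < 1 - (X : ℝ) / a := by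
    rw [sub_pos, div_lt_one (by linarith)]; exact hXr
  have hC1 : (yn a1 (2 * X + 1) : ℝ) ≤ (2 * a) ^ (2 * X) := by exact_mod_cast yn_le_pow a1 (2 * X)
  have hK1 : (yn κ1 (X + 1) : ℝ) ≤ (2 * κ) ^ X := by exact_mod_cast yn_le_pow κ1 X
  have hC2 : (2 * (a : ℝ) - 1) ^ (2 * X) ≤ yn a1 (2 * X + 1) := by
    exact_mod_cast pow_le_yn a1 (2 * X)
  have hK2 : (2 * (κ : ℝ) - 1) ^ X ≤ yn κ1 (X + 1) := by exact_mod_cast pow_le_yn κ1 X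
  have hb : ∀ (m : ℕ) (c : ℝ), 1 ≤ c → (1 - m / (2 * c)) * (2 * c) ^ m ≤ (2 * c - 1) ^ m := by
    intro m c hc
    have h1 := one_add_mul_le_pow (a := -(1 / (2 * c))) (by
      have : 1 / (2 * c) ≤ 1 := by rw [div_le_one (by linarith)]; linarith
      linarith) m
    have h2 : (2 * c - 1) ^ m = (1 + -(1 / (2 * c))) ^ m * (2 * c) ^ m := by
      rw [← mul_pow]; congr 1; field_simp; ring
    rw [h2]
    apply mul_le_mul_of_nonneg_right _ (by positivity)
    calc 1 - m / (2 * c) = 1 + m * -(1 / (2 * c)) := by ring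
      _ ≤ _ := h1
  constructor
  · calc (1 - (X : ℝ) / a) * ρ * yn κ1 (X + 1) ≤ (1 - (X : ℝ) / a) * ρ * (2 * κ) ^ X :=
          mul_le_mul_of_nonneg_left hK1 (by positivity)
      _ = (1 - (X : ℝ) / a) * (2 * a) ^ (2 * X) := by rw [mul_assoc, hρ]
      _ = (1 - ((2 * X : ℕ) : ℝ) / (2 * a)) * (2 * a) ^ (2 * X) := by
          congr 2; push_cast; field_simp
      _ ≤ (2 * (a : ℝ) - 1) ^ (2 * X) := hb _ _ har.le
      _ ≤ _ := hC2
  · calc (1 - (X : ℝ) / a) * yn a1 (2 * X + 1) ≤ (1 - (X : ℝ) / a) * (2 * a) ^ (2 * X) :=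
          mul_le_mul_of_nonneg_left hC1 hε.le
      _ = ρ * ((1 - (X : ℝ) / a) * (2 * κ) ^ X) := by rw [← hρ]; ring
      _ ≤ ρ * ((1 - (X : ℝ) / (2 * κ)) * (2 * κ) ^ X) := by
          gcongr
          rw [ha', hκ']
          nlinarith
      _ ≤ ρ * (2 * (κ : ℝ) - 1) ^ X := mul_le_mul_of_nonneg_left (hb _ _ hκr.le) hρ0.le
      _ ≤ ρ * yn κ1 (X + 1) := mul_le_mul_of_nonneg_left hK2 hρ0.le

/-- The central binomial coefficient is the constant term, in base `V`, of the integral part of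
`(V + 1) ^ (2 * X) / V ^ X`. -/
lemma central_expansion (V X : ℕ) (hX : 1 ≤ X) : ∃ J r : ℕ,
    (V + 1) ^ (2 * X) = V ^ X * (V * J + (2 * X).choose X) + r ∧ V * r ≤ 4 ^ X * V ^ X := by
  have h1 : (V + 1) ^ (2 * X) = ∑ i ∈ Finset.range (X + (X + 1)), V ^ i * (2 * X).choose i := by
    rw [add_pow]; simp [two_mul, add_assoc]
  rw [Finset.sum_range_add, Finset.sum_range_succ'] at h1
  refine ⟨∑ i ∈ Finset.range X, V ^ i * (2 * X).choose (X + (i + 1)),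
    ∑ i ∈ Finset.range X, V ^ i * (2 * X).choose i, ?_, ?_⟩
  · rw [h1, add_comm]
    congr 1
    rw [mul_add, Finset.mul_sum, Finset.mul_sum, add_zero]
    congr 1
    apply Finset.sum_congr rfl
    intro i _
    ring
  · obtain ⟨Z, rfl⟩ : ∃ Z, X = Z + 1 := ⟨X - 1, by omega⟩
    rcases Nat.eq_zero_or_pos V with rfl | hV
    · simp
    have h2 : ∑ i ∈ Finset.range (Z + 1), V ^ i * (2 * (Z + 1)).choose i ≤
        ∑ i ∈ Finset.range (Z + 1), V ^ Z * (2 * (Z + 1)).choose i := by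
      apply Finset.sum_le_sum
      intro i hi
      have := Finset.mem_range.mp hi
      exact Nat.mul_le_mul_right _ (Nat.pow_le_pow_right hV (by omega))
    have h3 : ∑ i ∈ Finset.range (Z + 1), (2 * (Z + 1)).choose i ≤ 4 ^ (Z + 1) := by
      calc _ ≤ ∑ i ∈ Finset.range (2 * (Z + 1) + 1), (2 * (Z + 1)).choose i := by
            apply Finset.sum_le_sum_of_subset
            intro i; simp; omega
        _ = 2 ^ (2 * (Z + 1)) := Nat.sum_range_choose _
        _ = 4 ^ (Z + 1) := by rw [pow_mul]; norm_num
    rw [← Finset.mul_sum] at h2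
    calc V * _ ≤ V * (V ^ Z * _) := Nat.mul_le_mul_left _ h2
      _ ≤ V * (V ^ Z * 4 ^ (Z + 1)) := by gcongr
      _ = _ := by ring
end

/-! ### Soundness of the binomial system -/

section
open Pell

section
variable {R : Type*} [CommRing R]

/-- The number tested for being a power of two; `w` is meant to make it `2 ^ (2X + 1)`, which
forces `b` to be a power of two up to sign. -/
def bW (b w : R) : R := b ^ 2 * w
/-- The base in which `(2X).choose X` is read off: `(V + 1) ^ (2X) / V ^ X` is a multiple of `V`
plus the binomial coefficient plus a small remainder when `V` is large. It is a multiple of `Y`.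
-/
def bV (b w Y : R) : R := 4 * bW b w ^ 2 * Y
/-- A large common factor of the two Pell parameters; as a multiple of `l²` it bounds the error of
the quotient of Pell solutions. -/
def bQ (l X Y : R) : R := l ^ 2 * X * Y
/-- The Pell parameter for `C`. -/
def bA (b w l X Y : R) : R := bQ l X Y * (bV b w Y + 1)
/-- The Pell parameter for `K`. -/
def bκ (b w l X Y : R) : R := 2 * bQ l X Y ^ 2 * bV b w Y
/-- A number congruent to `2X + 1` modulo `A - 1`, meant to be `y_{2X+1}(A)`. -/
def bC (b w l X Y h : R) : R := 2 * X + 1 + h * (bA b w l X Y - 1)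
/-- A number congruent to `X + 1` modulo `κ - 1`, meant to be `y_{X+1}(κ)`. -/
def bK (b w l X Y k : R) : R := X + 1 + k * (bκ b w l X Y - 1)
/-- The modulus `4A - 5` of the test for powers of two. -/
def bS (b w l X Y : R) : R := 4 * bA b w l X Y - 5
/-- When `C = y_{2X+1}(A)` and `A` is large, the divisibility `S ∣ T` says that `W = 2 ^ (2X +
1)`. -/
def bT (b w l X Y h : R) : R := 3 * bW b w * bC b w l X Y h - 2 * (bW b w ^ 2 - 1)
/-- If `N > 0` and this is positive, then `x`, `l`, `w` are nonzero, `0 < g < N`, and `C / K` lies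
within `1 / 4` of the multiple `l * Y` of `Y`. -/
def bR (b w l X Y h k x g N : R) : R :=
  x ^ 2 * l ^ 2 * w ^ 2 * (g * (N - g) * bK b w l X Y k ^ 2 -
    4 * N ^ 2 * (bC b w l X Y h - l * Y * bK b w l X Y k) ^ 2)
/-- A square iff `|K|` is some `y_n(κ)`. -/
def bA₁ (b w l X Y k : R) : R := (bκ b w l X Y ^ 2 - 1) * bK b w l X Y k ^ 2 + 1
/-- A square for some `u`, `v` iff `R > 0`. -/
def bA₂ (b w l X Y h k x g N u v : R) : R :=
  (4 * bR b w l X Y h k x g N - 2) * ((2 * u + 1) * (3 * v + 1)) ^ 2 + 1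
/-- In the range of interest, a square for some `x ≠ 0` and `y` iff `C = y_{2X+1}(A)`. -/
def bA₃ (b w l X Y h x y : R) : R :=
  pDFI (bA b w l X Y) (2 * X + 1) (bC b w l X Y h) x y
end

lemma bS_ne_zero (b w l X Y : ℤ) : bS b w l X Y ≠ 0 := by
  rw [bS]; omega

/-- Here `4 g (N - g) ≤ N²` turns positivity of `R` into a bound independent of `g` and `N`. -/
lemma bR_pos {b w l X Y h k x g N : ℤ} (hN : 0 < N) (h0 : 0 < bR b w l X Y h k x g N) :
    x ≠ 0 ∧ l ≠ 0 ∧ w ≠ 0 ∧ 0 < g ∧ g < N ∧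
      16 * (bC b w l X Y h - l * Y * bK b w l X Y k) ^ 2 < bK b w l X Y k ^ 2 := by
  rw [bR] at h0
  generalize bK b w l X Y k = K at *
  generalize bC b w l X Y h - l * Y * K = Z at *
  have hx : x ≠ 0 := by rintro rfl; simp at h0
  have hl : l ≠ 0 := by rintro rfl; simp at h0
  have hw : w ≠ 0 := by rintro rfl; simp at h0
  have h1 : 0 < g * (N - g) * K ^ 2 - 4 * N ^ 2 * Z ^ 2 :=
    pos_of_mul_pos_right h0 (by positivity)
  have h2 : 0 < g * (N - g) := by
    by_contra h3
    push Not at h3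
    nlinarith [sq_nonneg K, mul_nonneg (sq_nonneg N) (sq_nonneg Z)]
  have hg : 0 < g ∧ g < N := by
    rcases pos_and_pos_or_neg_and_neg_of_mul_pos h2 with h3 | h3
    · exact ⟨h3.1, by linarith [h3.2]⟩
    · linarith [h3.1, h3.2]
  refine ⟨hx, hl, hw, hg.1, hg.2, ?_⟩
  have h3 : 4 * (g * (N - g)) ≤ N ^ 2 := by nlinarith [sq_nonneg (N - 2 * g)]
  have h4 : N ^ 2 * (16 * Z ^ 2) < N ^ 2 * K ^ 2 := by
    nlinarith [mul_le_mul_of_nonneg_right h3 (sq_nonneg K)]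
  exact lt_of_mul_lt_mul_left h4 (sq_nonneg N)

/-- The growth of the Pell sequences pins down the index of the solution with parameter `κ`. -/
lemma index_unique {a κ X n : ℕ} (a1 : 1 < a) (κ1 : 1 < κ) {K k z : ℤ} (ha : a + 1 ≤ κ)
    (hX : 3 * X + 4 ≤ κ) (hn : K.natAbs = yn κ1 n) (hK : K = X + 1 + k * (κ - 1)) (hz : 4 ≤ |z|)
    (h : 16 * ((yn a1 (2 * X + 1) : ℤ) - z * K) ^ 2 < K ^ 2) :
    K = yn κ1 (X + 1) := by
  by_cases hbig : 2 * X + 2 ≤ n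
  · exfalso
    have h1 : (yn κ1 (2 * X + 1 + 1) : ℤ) ≤ yn κ1 n := by
      exact_mod_cast (strictMono_y κ1).monotone (by omega)
    have h2 := pow_le_yn κ1 (2 * X + 1)
    have h3 : (yn a1 (2 * X + 1) : ℤ) ≤ (2 * a) ^ (2 * X) := by exact_mod_cast yn_le_pow a1 (2 * X)
    have ha' : (a : ℤ) + 1 ≤ κ := by exact_mod_cast ha
    have a1' : (1 : ℤ) < a := by exact_mod_cast a1
    have h4 : ((2 * a : ℤ)) ^ (2 * X) * 4 ≤ (2 * (κ : ℤ) - 1) ^ (2 * X + 1) := by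
      rw [pow_succ]
      apply mul_le_mul _ (by linarith) (by norm_num) (by apply pow_nonneg; linarith)
      exact pow_le_pow_left₀ (by linarith) (by linarith) _
    have hKabs : |K| = yn κ1 n := by rw [Int.abs_eq_natAbs, hn]
    have h5 : 4 * (yn a1 (2 * X + 1) : ℤ) ≤ |K| := by linarith
    have h6 : |4 * ((yn a1 (2 * X + 1) : ℤ) - z * K)| < |K| := by
      rw [← sq_lt_sq]; linarith
    have h7 : |z * K| ≤ |(yn a1 (2 * X + 1) : ℤ)| + |(yn a1 (2 * X + 1) : ℤ) - z * K| := by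
      have := abs_sub (yn a1 (2 * X + 1) : ℤ) ((yn a1 (2 * X + 1) : ℤ) - z * K)
      simpa using this
    rw [abs_mul] at h6 h7
    rw [show |(4 : ℤ)| = 4 from rfl] at h6
    rw [abs_of_nonneg (by positivity : (0 : ℤ) ≤ yn a1 (2 * X + 1))] at h7
    have h8 : 4 * |K| ≤ |z| * |K| := mul_le_mul_of_nonneg_right hz (abs_nonneg _)
    linarith [abs_nonneg K]
  · have hmod := yn_modEq_int κ1 n
    have hκ : (3 * X + 4 : ℤ) ≤ κ := by exact_mod_cast hX
    rcases Int.natAbs_eq K with h1 | h1 <;> rw [hn] at h1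
    · have h2 : (κ - 1 : ℤ) ∣ (n : ℤ) - (X + 1) := by
        obtain ⟨r, hr⟩ := hmod
        exact ⟨k - r, by linear_combination -hr + hK - h1⟩
      have h3 := Int.eq_zero_of_abs_lt_dvd h2 (by rw [abs_lt]; constructor <;> omega)
      rw [h1, show n = X + 1 by omega]
    · exfalso
      have h2 : (κ - 1 : ℤ) ∣ (n : ℤ) + (X + 1) := by
        obtain ⟨r, hr⟩ := hmod
        exact ⟨-k - r, by linear_combination -hr - hK + h1⟩
      have h3 := Int.eq_zero_of_abs_lt_dvd h2 (by rw [abs_lt]; constructor <;> omega)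
      omega

lemma rho_ge (V X : ℕ) (hV : 1 ≤ V) : (V : ℝ) ^ X ≤ (V + 1) ^ (2 * X) / V ^ X := by
  have hVr : (1 : ℝ) ≤ V := by exact_mod_cast hV
  rw [le_div_iff₀ (by positivity), ← pow_add, ← two_mul]
  gcongr
  linarith

lemma rho_bounds {V X : ℕ} (hV : 1 ≤ V) (hX : 1 ≤ X) : ∃ J : ℕ,
    ((V * J + (2 * X).choose X : ℕ) : ℝ) ≤ (V + 1) ^ (2 * X) / V ^ X ∧
    ((V : ℝ) + 1) ^ (2 * X) / V ^ X ≤ (V * J + (2 * X).choose X : ℕ) + 4 ^ X / V := by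
  obtain ⟨J, r, h1, h2⟩ := central_expansion V X hX
  have hVr : (1 : ℝ) ≤ V := by exact_mod_cast hV
  have h1' : ((V : ℝ) + 1) ^ (2 * X) = V ^ X * (V * J + (2 * X).choose X : ℕ) + r := by
    exact_mod_cast h1
  have h2' : (V : ℝ) * r ≤ 4 ^ X * V ^ X := by exact_mod_cast h2
  refine ⟨J, ?_, ?_⟩
  · rw [le_div_iff₀ (by positivity), h1']
    have : (0 : ℝ) ≤ r := by positivity
    linarith
  · rw [div_le_iff₀ (by positivity), h1', add_mul]
    have : (r : ℝ) ≤ 4 ^ X / V * V ^ X := by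
      rw [div_mul_eq_mul_div, le_div_iff₀ (by positivity)]; linarith
    linarith

/-- A first, crude, lower bound for `z = l * Y`. -/
lemma z_lower {ρ ε z C K v : ℝ} (hK : 0 < K) (h1 : (1 - ε) * ρ * K ≤ C) (hε : ε ≤ 1 / 68)
    (hv : 16 ≤ v) (hρ : v ≤ ρ) (hz : 16 * (C - z * K) ^ 2 < K ^ 2) : v / 2 ≤ z := by
  have h2 : C - z * K < K / 4 := by nlinarith
  have h3 : (1 - ε) * ρ < z + 1 / 4 := by
    refine lt_of_mul_lt_mul_right (?_ : (1 - ε) * ρ * K < (z + 1 / 4) * K) hK.le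
    linarith
  nlinarith

/-- The distance from `z = l * Y` to the integer `M` is less than `1`. -/
lemma z_eq {ρ ε z C K V Y M : ℝ} (hK : 0 < K) (h1 : (1 - ε) * ρ * K ≤ C)
    (h1' : (1 - ε) * C ≤ ρ * K) (hε0 : 0 ≤ ε) (hε : ε ≤ 1 / 68) (hz8 : 8 ≤ z)
    (hεz : ε * z ^ 2 * V ≤ Y) (hV : 0 < V) (hVY : 256 * Y ≤ V) (hM : M ≤ ρ) (hM' : ρ ≤ M + 1 / 16)
    (hz : 16 * (C - z * K) ^ 2 < K ^ 2) : z < M + 1 ∧ M < z + 1 := by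
  have h2 : C - z * K < K / 4 := by nlinarith
  have h2' : -(K / 4) < C - z * K := by nlinarith
  have h3 : (1 - ε) * ρ < z + 1 / 4 := by
    refine lt_of_mul_lt_mul_right (?_ : (1 - ε) * ρ * K < (z + 1 / 4) * K) hK.le
    linarith
  have h4 : (1 - ε) * (z - 1 / 4) < ρ := by
    refine lt_of_mul_lt_mul_right (?_ : (1 - ε) * (z - 1 / 4) * K < ρ * K) hK.le
    nlinarith
  have h5 : ρ ≤ 2 * z := by nlinarith
  have h6 : ε * z ≤ 1 / 256 := by
    have h7 : V * (256 * (ε * z) * z) ≤ V * 1 := by nlinarith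
    have h8 := le_of_mul_le_mul_left h7 hV
    nlinarith
  constructor <;> nlinarith

lemma kappa_gt {q V : ℕ} (hq : 4 ≤ q) (hV : 1 ≤ V) : q * (V + 1) + 1 ≤ 2 * q ^ 2 * V := by
  have : 4 * (q * V) ≤ q * (q * V) := Nat.mul_le_mul_right _ hq
  have : q ≤ q * V := Nat.le_mul_of_pos_right _ hV
  nlinarith

set_option maxHeartbeats 1000000 in
/-- The conditions make `C = y_{2X+1}(A)` and `W = 2 ^ (2X + 1)`, then `K = y_{X+1}(κ)` by
`index_unique`. The quotient `C / K` is both close to `V * J + (2X).choose X` and to `l * Y`;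
these integers coincide, and `Y ∣ V`. -/
theorem bridge_sound {X Y : ℕ} {b w l h k x y g N : ℤ} (hX : 1 ≤ X) (hY : 4 ≤ Y) (hb : b ≠ 0)
    (hN : 0 < N)
    (h1 : ∃ s, s ^ 2 = bA₁ b w l X Y k)
    (h2 : 0 < bR b w l X Y h k x g N)
    (h3 : ∃ s, s ^ 2 = bA₃ b w l X Y h x y)
    (h4 : bS b w l X Y ∣ bT b w l X Y h) :
    (∃ t, b.natAbs = 2 ^ t) ∧ Y ∣ (2 * X).choose X := by
  obtain ⟨hx, hl, hw, -, -, hR⟩ := bR_pos hN h2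
  obtain ⟨s₁, h1⟩ := h1
  obtain ⟨s₃, h3⟩ := h3
  rw [bS, bT] at h4
  rw [bA₁] at h1
  rw [bA₃] at h3
  have hW : bW b w ≠ 0 := mul_ne_zero (pow_ne_zero _ hb) hw
  set W := bW b w with hWdef
  obtain ⟨V, hVdef⟩ : ∃ V : ℕ, (V : ℤ) = bV b w Y :=
    ⟨(bV b w (Y : ℤ)).toNat, by rw [Int.toNat_of_nonneg]; rw [bV]; positivity⟩
  have hVW : (V : ℤ) = 4 * W ^ 2 * Y := hVdef
  have hW2 : 1 ≤ W ^ 2 := by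
    have : 0 < W ^ 2 := by positivity
    linarith
  have hV16 : 16 ≤ V := by
    have : (4 : ℤ) ≤ Y := by exact_mod_cast hY
    zify; rw [hVW]; nlinarith
  obtain ⟨q, hq⟩ : ∃ q : ℕ, (q : ℤ) = bQ l X Y :=
    ⟨(bQ l (X : ℤ) (Y : ℤ)).toNat, by rw [Int.toNat_of_nonneg]; rw [bQ]; positivity⟩
  have hql : (q : ℤ) = l ^ 2 * X * Y := hq
  have hl2 : 1 ≤ l ^ 2 := by
    have : 0 < l ^ 2 := by positivity
    linarith
  have hqXY : X * Y ≤ q := by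
    zify; rw [hql]
    have : (0 : ℤ) ≤ X * Y := by positivity
    nlinarith
  have hqX : 4 * X ≤ q := by rw [mul_comm]; exact (Nat.mul_le_mul_left X hY).trans hqXY
  have hq1 : 4 ≤ q := by omega
  have ha : bA b w l (X : ℤ) (Y : ℤ) = (q * (V + 1) : ℕ) := by
    rw [bA, ← hVdef, ← hq]; push_cast; rfl
  have hκ : bκ b w l (X : ℤ) (Y : ℤ) = (2 * q ^ 2 * V : ℕ) := by
    rw [bκ, ← hVdef, ← hq]; push_cast; rfl
  obtain ⟨a, hadef⟩ : ∃ a, a = q * (V + 1) := ⟨_, rfl⟩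
  obtain ⟨κ, hκdef⟩ : ∃ κ, κ = 2 * q ^ 2 * V := ⟨_, rfl⟩
  rw [← hadef] at ha
  rw [← hκdef] at hκ
  have haX : 17 * q ≤ a := by rw [hadef, mul_comm]; exact Nat.mul_le_mul_left q (by omega)
  have hκa : a + 1 ≤ κ := by rw [hadef, hκdef]; exact kappa_gt hq1 (by omega)
  have a1 : 1 < a := by omega
  have κ1 : 1 < κ := by omega
  have hCeq : bC b w l (X : ℤ) Y h = yn a1 (2 * X + 1) := by
    rw [ha] at h3
    refine dfi_sound a1 (B := 2 * X + 1) (by omega) (by omega) (h := h) ?_ hx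
      (by push_cast; exact h3)
    rw [bC, ha]; push_cast; rfl
  have hzY : 4 ≤ |l * Y| := by
    rw [abs_mul, Nat.abs_cast]
    have : 1 ≤ |l| := Int.one_le_abs hl
    have : (4 : ℤ) ≤ Y := by exact_mod_cast hY
    nlinarith
  have hKeq : bK b w l (X : ℤ) Y k = yn κ1 (X + 1) := by
    rw [hκ] at h1
    obtain ⟨n, -, hn⟩ := pell_sol κ1 h1
    refine index_unique a1 κ1 hκa (by omega) hn (k := k) ?_ hzY (by rw [← hCeq]; exact hR)
    rw [bK, hκ]
  rw [hCeq, hKeq] at hR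
  rw [hCeq, ha] at h4
  have hX' : X < a := by omega
  obtain ⟨hr1, hr2⟩ := pell_ratio a1 κ1 hadef hκdef (by omega) (by omega) hX'
  have hRr : 16 * ((yn a1 (2 * X + 1) : ℝ) - (l * Y : ℝ) * yn κ1 (X + 1)) ^ 2 <
      (yn κ1 (X + 1) : ℝ) ^ 2 := by exact_mod_cast hR
  have hKpos : (0 : ℝ) < yn κ1 (X + 1) := by
    have : 0 < yn κ1 (X + 1) := by simpa using (strictMono_y κ1 (Nat.succ_pos X))
    exact_mod_cast this
  have hapos : (0 : ℝ) < a := by exact_mod_cast (by omega : 0 < a)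
  have hε0 : (0 : ℝ) ≤ X / a := by positivity
  have hε : (X : ℝ) / a ≤ 1 / 68 := by
    rw [div_le_div_iff₀ hapos (by norm_num)]
    have : X * 68 ≤ 1 * a := by omega
    exact_mod_cast this
  have hV16r : (16 : ℝ) ≤ V := by exact_mod_cast hV16
  have hVX : (V : ℝ) ≤ V ^ X := le_self_pow₀ (by linarith) (by omega)
  have hzlow := z_lower hKpos hr1 hε (by linarith) (rho_ge V X (by omega)) hRr
  have hWeq : W = 2 ^ (2 * X + 1) := by
    refine exp_sound a1 (by omega) hW h4 ?_
    have e1 : (V : ℤ) ^ (2 * X) ≤ 4 * (l * Y) ^ 2 := by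
      have : (V : ℝ) ^ (2 * X) ≤ 4 * (l * Y) ^ 2 := by
        rw [mul_comm 2 X, pow_mul]
        nlinarith
      exact_mod_cast this
    have e2 : (Y * a : ℤ) = (l * Y) ^ 2 * (X * (V + 1)) := by
      rw [hadef]; push_cast; rw [hql]; ring
    have e3 : (16 : ℤ) ^ (2 * X) ≤ V ^ (2 * X) := by
      exact_mod_cast Nat.pow_le_pow_left hV16 (2 * X)
    have e4 : (4 : ℤ) ^ (2 * X + 1) = 4 * 16 ^ X := by rw [pow_succ, pow_mul]; norm_num; ring
    have e5 : (16 : ℤ) ^ (2 * X) = 16 ^ X * 16 ^ X := by rw [two_mul, pow_add]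
    have e6 : (16 : ℤ) ≤ 16 ^ X := by
      exact_mod_cast le_self_pow₀ (by norm_num : 1 ≤ 16) (by omega : X ≠ 0)
    have hXz : (1 : ℤ) ≤ X := by exact_mod_cast hX
    have hYz : (4 : ℤ) ≤ Y := by exact_mod_cast hY
    have e7 : (4 * Y) * (16 ^ (2 * X) * W ^ 2) ≤ (4 * Y) * (a : ℤ) := by
      calc (4 * Y) * ((16 : ℤ) ^ (2 * X) * W ^ 2) = 16 ^ (2 * X) * V := by rw [hVW]; ring
        _ ≤ (4 * (l * Y) ^ 2) * V := by
            apply mul_le_mul_of_nonneg_right _ (by positivity); linarith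
        _ ≤ (4 * (l * Y) ^ 2) * (X * (V + 1)) := by
            apply mul_le_mul_of_nonneg_left _ (by positivity)
            nlinarith [(by positivity : (0 : ℤ) ≤ V)]
        _ = 4 * (Y * a) := by rw [e2]; ring
        _ = _ := by ring
    have e8 := le_of_mul_le_mul_left e7 (by positivity)
    rw [e4]
    rw [e5] at e8
    have e9 : (16 : ℤ) ≤ 16 ^ X * W ^ 2 := e6.trans (le_mul_of_one_le_right (by positivity) hW2)
    have e10 : 16 * ((16 : ℤ) ^ X * W ^ 2) ≤ 16 ^ X * 16 ^ X * W ^ 2 := by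
      rw [mul_assoc ((16 : ℤ) ^ X)]; exact mul_le_mul_of_nonneg_right e6 (by positivity)
    linarith
  constructor
  · have hbd : b.natAbs ∣ 2 ^ (2 * X + 1) := by
      have : b ∣ 2 ^ (2 * X + 1) := ⟨b * w, by rw [← hWeq, hWdef, bW]; ring⟩
      have := Int.natAbs_dvd_natAbs.mpr this
      rwa [Int.natAbs_pow] at this
    obtain ⟨t, -, ht⟩ := (Nat.dvd_prime_pow Nat.prime_two).mp hbd
    exact ⟨t, ht⟩
  · have hVval : V = 16 * 16 ^ X * Y := by
      zify; rw [hVW, hWeq, ← pow_mul, show (2 * X + 1) * 2 = 4 * X + 2 by ring, pow_add, pow_mul,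
        show (2 : ℤ) ^ 4 = 16 by norm_num]
      ring
    obtain ⟨J, hJ1, hJ2⟩ := rho_bounds (V := V) (by omega) hX
    have hY0 : (0 : ℝ) < Y := by exact_mod_cast (by omega : 0 < Y)
    have h416 : (4 : ℝ) ^ X ≤ 16 ^ X := by gcongr; norm_num
    have h16X : (16 : ℝ) ≤ 16 ^ X := by
      exact_mod_cast le_self_pow₀ (by norm_num : 1 ≤ 16) (by omega : X ≠ 0)
    have hVr : (V : ℝ) = 16 * 16 ^ X * Y := by exact_mod_cast hVval
    have hYr : (4 : ℝ) ≤ Y := by exact_mod_cast hY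
    have hδ : (4 : ℝ) ^ X / V ≤ 1 / 16 := by
      rw [div_le_iff₀ (by linarith), hVr]; nlinarith
    have hεz : (X : ℝ) / a * (l * Y) ^ 2 * V ≤ Y := by
      have e2 : (Y * a : ℝ) = (l * Y) ^ 2 * (X * (V + 1)) := by
        have : (Y * a : ℤ) = (l * Y) ^ 2 * (X * (V + 1)) := by
          rw [hadef]; push_cast; rw [hql]; ring
        exact_mod_cast this
      rw [div_mul_eq_mul_div, div_mul_eq_mul_div, div_le_iff₀ hapos, e2]
      have : (0 : ℝ) ≤ (l * Y) ^ 2 * X := by positivity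
      nlinarith
    obtain ⟨f1, f2⟩ := z_eq hKpos hr1 hr2 hε0 hε (by linarith) hεz (by linarith)
      (by rw [hVr]; nlinarith) hJ1 (by linarith) hRr
    have f1' : l * Y < (V * J + (2 * X).choose X : ℕ) + 1 := by exact_mod_cast f1
    have f2' : ((V * J + (2 * X).choose X : ℕ) : ℤ) < l * Y + 1 := by exact_mod_cast f2
    have f3 : ((V * J + (2 * X).choose X : ℕ) : ℤ) = l * Y := by omega
    have f4 : Y ∣ V * J + (2 * X).choose X := by
      have : (Y : ℤ) ∣ (V * J + (2 * X).choose X : ℕ) := ⟨l, by rw [f3]; ring⟩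
      exact_mod_cast this
    refine (Nat.dvd_add_right ?_).mp f4
    exact Dvd.dvd.mul_right ⟨16 * 16 ^ X, by rw [hVval]; ring⟩ J
end

/-! ### Solvability of the binomial system -/

section
open Pell

/-- The quotient of the two Pell solutions is very close to `M = l * Y`. -/
lemma quot_close {ρ ε C K V Y M : ℝ} (hK : 0 < K) (h1 : (1 - ε) * ρ * K ≤ C)
    (h1' : (1 - ε) * C ≤ ρ * K) (hε0 : 0 ≤ ε) (hε : ε ≤ 1 / 68) (hY : 4 ≤ Y) (hYM : Y ≤ M)
    (hεz : ε * M ^ 2 * V ≤ Y) (hV : 0 < V) (hVY : 256 * Y ≤ V) (hM : M ≤ ρ)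
    (hM' : 64 * Y * (ρ - M) ≤ 1) : |32 * Y * (C - M * K)| ≤ K := by
  have h2 : 256 * (ε * M * Y) ≤ 1 := by
    have h3 : M * V * (256 * (ε * M * Y)) ≤ M * V * 1 := by
      calc M * V * (256 * (ε * M * Y)) = 256 * Y * (ε * M ^ 2 * V) := by ring
        _ ≤ 256 * Y * Y := by gcongr
        _ ≤ V * M := by gcongr
        _ = M * V * 1 := by ring
    exact le_of_mul_le_mul_left h3 (mul_pos (by linarith) hV)
  have hM0 : 0 < M := by linarith
  -- `C / K` lies between `M - ε M` and `ρ + 4 ε M`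
  have h4 : -(ε * M * K) ≤ C - M * K := by
    have : (1 - ε) * M * K ≤ (1 - ε) * ρ * K := by gcongr; linarith
    linarith
  have hρ : ρ ≤ 2 * M := by nlinarith
  have hC : C ≤ 4 * M * K := by
    have : ρ * K ≤ 2 * M * K := by gcongr
    have hMK : 0 < M * K := by positivity
    by_contra h5
    push Not at h5
    nlinarith
  have h6 : C - M * K ≤ (ρ - M) * K + 4 * (ε * M * K) := by
    have : ε * C ≤ ε * (4 * M * K) := by gcongr
    linarith
  have h7 : 256 * Y * (ε * M * K) ≤ K := by
    have := mul_le_mul_of_nonneg_right h2 hK.le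
    linarith
  have h8 : 64 * Y * ((ρ - M) * K) ≤ K := by
    have := mul_le_mul_of_nonneg_right hM' hK.le
    linarith
  rw [abs_le]
  constructor
  · have := mul_le_mul_of_nonneg_left h4 (by linarith : 0 ≤ 32 * Y)
    linarith
  · have := mul_le_mul_of_nonneg_left h6 (by linarith : 0 ≤ 32 * Y)
    linarith

lemma one_le_gap {g N : ℤ} (h0 : 0 < g) (h1 : g < N) : 1 ≤ g * (N - g) := by
  have : 0 < g * (N - g) := mul_pos h0 (by linarith)
  linarith

/-- Converse to `bR_pos`: `g (N - g) ≥ 1` and `N ≤ Y` make a bound of order `1 / Y` on the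
distance from `C / K` to `l * Y` sufficient. -/
lemma bR_pos_of_close {b w l X Y h k x g N : ℤ} (hx : x ≠ 0) (hl : l ≠ 0) (hw : w ≠ 0)
    (h0 : 0 < g) (h1 : g < N) (hNY : N ≤ Y) (hK : 0 < bK b w l X Y k)
    (hc : |32 * Y * (bC b w l X Y h - l * Y * bK b w l X Y k)| ≤ bK b w l X Y k) :
    0 < bR b w l X Y h k x g N := by
  rw [bR]
  generalize bK b w l X Y k = K at *
  generalize bC b w l X Y h - l * Y * K = Z at *
  have h2 : (32 * Y * Z) ^ 2 ≤ K ^ 2 := sq_le_sq.mpr (hc.trans (le_abs_self K))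
  have h3 : N ^ 2 * Z ^ 2 ≤ Y ^ 2 * Z ^ 2 := by
    have : N ^ 2 ≤ Y ^ 2 := by apply pow_le_pow_left₀ <;> linarith
    exact mul_le_mul_of_nonneg_right this (sq_nonneg Z)
  have h4 : K ^ 2 ≤ g * (N - g) * K ^ 2 :=
    le_mul_of_one_le_left (sq_nonneg K) (one_le_gap h0 h1)
  have h5 : 0 < K ^ 2 := by positivity
  have h6 : 0 < g * (N - g) * K ^ 2 - 4 * N ^ 2 * Z ^ 2 := by nlinarith
  positivity

set_option maxHeartbeats 1000000 in
/-- The unknowns are found in the order `w` (from `W = 2 ^ (2X + 1)`), `l` (from `l * Y = V * J +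
(2X).choose X`), `h` and `k` (from the Pell solutions), `x` and `y`, and last `u` and `v`. -/
theorem bridge_complete {X Y t : ℕ} {b g N : ℤ} (hX : 1 ≤ X) (hY : 4 ≤ Y) (hb : b.natAbs = 2 ^ t)
    (ht : 2 * t ≤ 2 * X + 1) (hXY : Y ∣ (2 * X).choose X) (h0 : 0 < g) (h1 : g < N) (hNY : N ≤ Y) :
    ∃ h k l w x y u v : ℤ, (∃ s, s ^ 2 = bA₁ b w l X Y k) ∧
      (∃ s, s ^ 2 = bA₂ b w l X Y h k x g N u v) ∧
      (∃ s, s ^ 2 = bA₃ b w l X Y h x y) ∧ bS b w l X Y ∣ bT b w l X Y h := by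
  have hb2 : b ^ 2 = 2 ^ (2 * t) := by
    rw [← Int.natAbs_sq, hb]; push_cast; rw [← pow_mul, mul_comm]
  -- This choice makes `W = b ^ 2 * w` equal to `2 ^ (2 * X + 1)`.
  set w : ℤ := 2 ^ (2 * X + 1 - 2 * t) with hw
  have hw0 : w ≠ 0 := by positivity
  have hW : bW b w = 2 ^ (2 * X + 1) := by
    rw [bW, hb2, hw, ← pow_add]; congr 1; omega
  obtain ⟨V, hVdef⟩ : ∃ V : ℕ, V = 16 * 16 ^ X * Y := ⟨_, rfl⟩
  have hV : bV b w (Y : ℤ) = V := by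
    rw [bV, hW, hVdef, ← pow_mul, show (2 * X + 1) * 2 = 4 * X + 2 by ring, pow_add, pow_mul,
      show (2 : ℤ) ^ 4 = 16 by norm_num]
    push_cast; ring
  have h16X : 16 ≤ 16 ^ X := le_self_pow₀ (by norm_num : 1 ≤ 16) (by omega : X ≠ 0)
  have hVY : 256 * Y ≤ V := by
    rw [hVdef]; exact Nat.mul_le_mul_right _ (by omega)
  obtain ⟨J, hJ1, hJ2⟩ := rho_bounds (V := V) (by omega) hX
  obtain ⟨l, hl⟩ : Y ∣ V * J + (2 * X).choose X :=
    dvd_add (Dvd.dvd.mul_right ⟨16 * 16 ^ X, by rw [hVdef]; ring⟩ J) hXY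
  have hchoose : 0 < (2 * X).choose X := Nat.choose_pos (by omega)
  have hl0 : 1 ≤ l := by
    rcases Nat.eq_zero_or_pos l with rfl | h
    · omega
    · exact h
  obtain ⟨q, hqdef⟩ : ∃ q, q = l ^ 2 * X * Y := ⟨_, rfl⟩
  have hQ : bQ (l : ℤ) X Y = q := by rw [bQ, hqdef]; push_cast; rfl
  have hqX : 4 * X ≤ q := by
    rw [hqdef]
    calc 4 * X = 1 ^ 2 * X * 4 := by ring
      _ ≤ l ^ 2 * X * Y := by gcongr
  obtain ⟨a, hadef⟩ : ∃ a, a = q * (V + 1) := ⟨_, rfl⟩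
  obtain ⟨κ, hκdef⟩ : ∃ κ, κ = 2 * q ^ 2 * V := ⟨_, rfl⟩
  have ha : bA b w (l : ℤ) X Y = a := by rw [bA, hV, hQ, hadef]; push_cast; rfl
  have hκ : bκ b w (l : ℤ) X Y = κ := by rw [bκ, hV, hQ, hκdef]; push_cast; rfl
  have haX : 17 * q ≤ a := by rw [hadef, mul_comm]; exact Nat.mul_le_mul_left q (by omega)
  have hκa : a + 1 ≤ κ := by rw [hadef, hκdef]; exact kappa_gt (by omega) (by omega)
  have a1 : 1 < a := by omega
  have κ1 : 1 < κ := by omega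
  obtain ⟨h, hh⟩ := yn_modEq_int a1 (2 * X + 1)
  obtain ⟨k, hk⟩ := yn_modEq_int κ1 (X + 1)
  obtain ⟨x, y, hx, hxy⟩ := dfi_complete a1 (2 * X + 1) (by omega)
  have hC : bC b w (l : ℤ) X Y h = yn a1 (2 * X + 1) := by
    rw [bC, ha]; push_cast at hh; linarith
  have hK : bK b w (l : ℤ) X Y k = yn κ1 (X + 1) := by
    rw [bK, hκ]; push_cast at hk; linarith
  have hKpos : 0 < yn κ1 (X + 1) := by simpa using (strictMono_y κ1 (Nat.succ_pos X))
  have hR : 0 < bR b w (l : ℤ) X Y h k x g N := by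
    refine bR_pos_of_close hx (by exact_mod_cast (by omega : l ≠ 0)) hw0 h0 h1 hNY ?_ ?_
    · rw [hK]; exact_mod_cast hKpos
    rw [hC, hK]
    obtain ⟨hr1, hr2⟩ := pell_ratio a1 κ1 hadef hκdef (by omega) (by omega) (by omega : X < a)
    have hVr : (V : ℝ) = 16 * 16 ^ X * Y := by exact_mod_cast hVdef
    have hlr : ((V * J + (2 * X).choose X : ℕ) : ℝ) = l * Y := by rw [hl]; push_cast; ring
    rw [hlr] at hJ1 hJ2
    have hapos : (0 : ℝ) < a := by exact_mod_cast (by omega : 0 < a)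
    have hVpos : (0 : ℝ) < V := by exact_mod_cast (by omega : 0 < V)
    have hKr : (0 : ℝ) < yn κ1 (X + 1) := by exact_mod_cast hKpos
    have hε : (X : ℝ) / a ≤ 1 / 68 := by
      rw [div_le_div_iff₀ hapos (by norm_num)]
      have : X * 68 ≤ 1 * a := by omega
      exact_mod_cast this
    have hYr : (4 : ℝ) ≤ Y := by exact_mod_cast hY
    have hYM : (Y : ℝ) ≤ l * Y := by
      have : (1 : ℝ) ≤ l := by exact_mod_cast hl0
      nlinarith
    have hεz : (X : ℝ) / a * (l * Y) ^ 2 * V ≤ Y := by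
      have e2 : (Y * a : ℝ) = (l * Y) ^ 2 * (X * (V + 1)) := by
        rw [hadef, hqdef]; push_cast; ring
      rw [div_mul_eq_mul_div, div_mul_eq_mul_div, div_le_iff₀ hapos, e2]
      have : (0 : ℝ) ≤ (l * Y) ^ 2 * X := by positivity
      nlinarith
    have hδ : 64 * (Y : ℝ) * ((V + 1) ^ (2 * X) / V ^ X - l * Y) ≤ 1 := by
      have e1 : ((V : ℝ) + 1) ^ (2 * X) / V ^ X - l * Y ≤ 4 ^ X / V := by linarith
      have e2 : 64 * (Y : ℝ) * (4 ^ X / V) ≤ 1 := by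
        rw [mul_div_assoc', div_le_one hVpos, hVr,
          show (16 : ℝ) ^ X = 4 ^ X * 4 ^ X by rw [← mul_pow]; norm_num]
        have e3 : (4 : ℝ) ≤ 4 ^ X := le_self_pow₀ (by norm_num) (by omega)
        have e4 : (0 : ℝ) ≤ Y * 4 ^ X := by positivity
        nlinarith
      exact (mul_le_mul_of_nonneg_left e1 (by positivity)).trans e2
    have := quot_close hKr hr1 hr2 (by positivity) hε hYr hYM hεz hVpos
      (by exact_mod_cast hVY) hJ1 hδ
    exact_mod_cast this
  obtain ⟨u, v, hs⟩ := (pos_iff_pell _).mp hR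
  refine ⟨h, k, l, w, x, y, u, v, ?_, hs, ?_, ?_⟩
  · refine ⟨xn κ1 (X + 1), ?_⟩
    rw [bA₁, hK, hκ]; exact pell_id κ1 (X + 1)
  · rw [bA₃, hC, ha]; exact_mod_cast hxy
  · rw [bS, bT, hW, hC, ha]
    have := pell_two_pow a1 (2 * X + 1)
    have e : ((2 : ℤ) ^ (2 * X + 1)) ^ 2 = 4 ^ (2 * X + 1) := by
      rw [← pow_mul, mul_comm, pow_mul]; norm_num
    rw [e]; exact this
end

/-! ### Binary digits and central binomial coefficients -/

/-- The number of ones in the binary expansion of `n`. -/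
def pop (n : ℕ) : ℕ := (Nat.digits 2 n).sum

lemma pop_zero : pop 0 = 0 := by simp [pop]

lemma pop_two_mul (n : ℕ) : pop (2 * n) = pop n := by
  rcases Nat.eq_zero_or_pos n with rfl | h
  · rfl
  · have := Nat.digits_add 2 (by norm_num) 0 n (by norm_num) (Or.inr h.ne')
    rw [pop, pop]
    rw [zero_add] at this
    rw [this]; simp

lemma pop_two_mul_add_one (n : ℕ) : pop (2 * n + 1) = pop n + 1 := by
  have := Nat.digits_add 2 (by norm_num) 1 n (by norm_num) (Or.inl one_ne_zero)
  rw [pop, pop, add_comm (2 * n) 1, this]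
  simp [add_comm]

lemma pop_add_two_pow_mul (m : ℕ) : ∀ x y : ℕ, x < 2 ^ m → pop (x + 2 ^ m * y) = pop x + pop y := by
  induction m with
  | zero => intro x y hx; have : x = 0 := by simpa using hx
            simp [this, pop_zero]
  | succ m ih =>
    intro x y hx
    rw [pow_succ] at hx
    rcases Nat.even_or_odd' x with ⟨k, rfl | rfl⟩
    · rw [show 2 * k + 2 ^ (m + 1) * y = 2 * (k + 2 ^ m * y) by ring, pop_two_mul, pop_two_mul,
        ih k y (by omega)]
    · rw [show 2 * k + 1 + 2 ^ (m + 1) * y = 2 * (k + 2 ^ m * y) + 1 by ring, pop_two_mul_add_one,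
        pop_two_mul_add_one, ih k y (by omega)]
      ring

lemma pop_compl (m : ℕ) : ∀ x : ℕ, x < 2 ^ m → pop x + pop (2 ^ m - 1 - x) = m := by
  induction m with
  | zero => intro x hx; have : x = 0 := by simpa using hx
            simp [this, pop_zero]
  | succ m ih =>
    intro x hx
    rw [pow_succ] at hx ⊢
    rcases Nat.even_or_odd' x with ⟨k, rfl | rfl⟩
    · rw [show 2 ^ m * 2 - 1 - 2 * k = 2 * (2 ^ m - 1 - k) + 1 by omega, pop_two_mul,
        pop_two_mul_add_one, ← add_assoc, ih k (by omega)]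
    · rw [show 2 ^ m * 2 - 1 - (2 * k + 1) = 2 * (2 ^ m - 1 - k) by omega, pop_two_mul,
        pop_two_mul_add_one, add_right_comm, ih k (by omega)]

lemma land_bit (x y : ℕ) : (2 * x) &&& (2 * y) = 2 * (x &&& y) ∧
    (2 * x + 1) &&& (2 * y) = 2 * (x &&& y) ∧ (2 * x) &&& (2 * y + 1) = 2 * (x &&& y) ∧
    (2 * x + 1) &&& (2 * y + 1) = 2 * (x &&& y) + 1 := by
  have h1 := Nat.land_bit false x false y
  have h2 := Nat.land_bit true x false y
  have h3 := Nat.land_bit false x true y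
  have h4 := Nat.land_bit true x true y
  simp only [Nat.bit_false, Nat.bit_true, Bool.and_false, Bool.and_true, Bool.and_self] at h1 h2 h3 h4
  exact ⟨h1, h2, h3, h4⟩

/-- Carries in the binary addition of `x` and `y` strictly decrease the number of ones. -/
lemma pop_add (x y : ℕ) : pop (x + y) ≤ pop x + pop y ∧
    (pop x + pop y ≤ pop (x + y) ↔ x &&& y = 0) := by
  induction hn : x + y using Nat.strong_induction_on generalizing x y with
  | _ n ih =>
    subst hn
    rcases Nat.even_or_odd' x with ⟨k, rfl | rfl⟩ <;> rcases Nat.even_or_odd' y with ⟨l, rfl | rfl⟩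
    · rcases Nat.eq_zero_or_pos (k + l) with h0 | h0
      · have h1 : k = 0 := by omega
        have h2 : l = 0 := by omega
        simp [h1, h2, pop_zero]
      obtain ⟨h1, h2⟩ := ih (k + l) (by omega) k l rfl
      rw [(land_bit k l).1, ← mul_add, pop_two_mul, pop_two_mul, pop_two_mul]
      exact ⟨h1, h2.trans (by omega)⟩
    · obtain ⟨h1, h2⟩ := ih (k + l) (by omega) k l rfl
      rw [(land_bit k l).2.2.1, ← add_assoc, ← mul_add, pop_two_mul, pop_two_mul_add_one,
        pop_two_mul_add_one]
      exact ⟨by omega, by omega⟩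
    · obtain ⟨h1, h2⟩ := ih (k + l) (by omega) k l rfl
      rw [(land_bit k l).2.1, add_right_comm, ← mul_add, pop_two_mul, pop_two_mul_add_one,
        pop_two_mul_add_one]
      exact ⟨by omega, by omega⟩
    · obtain ⟨h1, -⟩ := ih (k + l) (by omega) k l rfl
      obtain ⟨h3, -⟩ := ih (k + l + 1) (by omega) (k + l) 1 rfl
      have h4 : pop 1 = 1 := by simpa [pop_zero] using pop_two_mul_add_one 0
      rw [(land_bit k l).2.2.2, show 2 * k + 1 + (2 * l + 1) = 2 * (k + l + 1) by ring, pop_two_mul,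
        pop_two_mul_add_one, pop_two_mul_add_one]
      exact ⟨by omega, by omega⟩

/-- Kummer's theorem for the central binomial coefficient and the prime `2`. -/
lemma two_pow_dvd_central (n X : ℕ) : 2 ^ n ∣ (2 * X).choose X ↔ n ≤ pop X := by
  have hne : (2 * X).choose X ≠ 0 := (Nat.choose_pos (by omega)).ne'
  rw [padicValNat_dvd_iff_le hne]
  have h := sub_one_mul_padicValNat_choose_eq_sub_sum_digits' (p := 2) (k := X) (n := X)
  have h2 : (Nat.digits 2 (X + X)).sum = (Nat.digits 2 X).sum := by
    have := pop_two_mul X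
    rw [pop, pop] at this
    rwa [← two_mul]
  rw [h2, ← two_mul] at h
  have h3 : padicValNat 2 ((2 * X).choose X) = pop X := by
    rw [pop]; omega
  rw [h3]

/-- With `σ` the sum of binary digits, `σ(X) = σ(S + T) + (m - σ(S)) + (m - σ(T))`, which is at
most `2 m` with equality iff `S` and `T` have disjoint digits; and `2 ^ n` divides the central
binomial coefficient iff `n ≤ σ(X)`. -/
theorem central_iff_land {m S T X : ℕ} (hS : S < 2 ^ m) (hT : T < 2 ^ m)
    (hX : X = (S + T) * (2 ^ m) ^ 2 + (2 ^ m - 1 - S) * 2 ^ m + (2 ^ m - 1 - T)) :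
    (2 ^ m) ^ 2 ∣ (2 * X).choose X ↔ S &&& T = 0 := by
  have h1 : X = (2 ^ m - 1 - T) + 2 ^ m * ((2 ^ m - 1 - S) + 2 ^ m * (S + T)) := by rw [hX]; ring
  have h2 : pop X = pop (2 ^ m - 1 - T) + (pop (2 ^ m - 1 - S) + pop (S + T)) := by
    rw [h1, pop_add_two_pow_mul m _ _ (by omega), pop_add_two_pow_mul m _ _ (by omega)]
  have h3 := pop_compl m S hS
  have h4 := pop_compl m T hT
  rw [← pow_mul, two_pow_dvd_central, h2, ← (pop_add S T).2]
  omega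

lemma land_split {p x x' y y' : ℕ} (hx : x < 2 ^ p) (hy : y < 2 ^ p) :
    (x + 2 ^ p * x') &&& (y + 2 ^ p * y') = 0 ↔ x &&& y = 0 ∧ x' &&& y' = 0 := by
  have e : ∀ n : ℕ, n = 0 ↔ n % 2 ^ p = 0 ∧ n / 2 ^ p = 0 := by
    intro n
    constructor
    · rintro rfl; simp
    · rintro ⟨h1, h2⟩; rw [← Nat.mod_add_div n (2 ^ p), h1, h2]; simp
  rw [e, Nat.and_mod_two_pow, Nat.and_div_two_pow]
  simp only [Nat.add_mul_mod_self_left, Nat.mod_eq_of_lt hx, Nat.mod_eq_of_lt hy]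
  rw [Nat.add_mul_div_left _ _ (by positivity), Nat.add_mul_div_left _ _ (by positivity),
    Nat.div_eq_of_lt hx, Nat.div_eq_of_lt hy, zero_add, zero_add]

lemma land_two_pow_sub_two_pow {c p y : ℕ} (hc : c ≤ p) (hy : y < 2 ^ p) :
    y &&& (2 ^ p - 2 ^ c) = 0 ↔ y < 2 ^ c := by
  obtain ⟨q, rfl⟩ := Nat.exists_eq_add_of_le hc
  have h1 : 2 ^ (c + q) - 2 ^ c = 0 + 2 ^ c * (2 ^ q - 1) := by
    rw [pow_add, Nat.mul_sub, mul_one, zero_add]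
  have hpos : 0 < 2 ^ c := by positivity
  have hlt : y / 2 ^ c < 2 ^ q := by
    rw [Nat.div_lt_iff_lt_mul hpos, mul_comm, ← pow_add]; exact hy
  rw [h1]
  nth_rewrite 1 [← Nat.mod_add_div y (2 ^ c)]
  rw [land_split (Nat.mod_lt _ hpos) hpos, Nat.and_two_pow_sub_one_eq_mod,
    Nat.mod_eq_of_lt hlt, Nat.div_eq_zero_iff]
  simp

lemma mask_lt {c : ℕ} {e : ℕ → ℕ} (he : ∀ i, e i + c ≤ e (i + 1)) (n : ℕ) :
    ∀ p, (∀ i < n, e i + c ≤ p) → ∑ i ∈ Finset.range n, (2 ^ c - 1) * 2 ^ e i < 2 ^ p := by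
  induction n with
  | zero => intro p _; simp
  | succ n ih =>
    intro p hp
    have h1 := ih (e n) (fun i hi => (he i).trans
      ((monotone_nat_of_le_succ fun i => (Nat.le_add_right _ _).trans (he i)) (by omega)))
    rw [Finset.sum_range_succ]
    have h2 : 2 ^ c * 2 ^ e n ≤ 2 ^ p := by
      rw [← pow_add]; exact Nat.pow_le_pow_right (by norm_num) (by have := hp n (by omega); omega)
    have h3 : (2 ^ c - 1) * 2 ^ e n + 2 ^ e n = 2 ^ c * 2 ^ e n := by
      rw [Nat.sub_mul, one_mul, Nat.sub_add_cancel (Nat.le_mul_of_pos_left _ (by positivity))]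
    omega

/-- Reading off binary digits: `x` has no bit in common with the complement of the mask made of
blocks of `c` ones at the positions `e i` iff `x` is a sum of blocks of length `c` placed at these
positions. -/
lemma land_mask {c : ℕ} {e : ℕ → ℕ} (he : ∀ i, e i + c ≤ e (i + 1)) (n : ℕ) :
    ∀ p x, (∀ i < n, e i + c ≤ p) → x < 2 ^ p →
      (x &&& (2 ^ p - 1 - ∑ i ∈ Finset.range n, (2 ^ c - 1) * 2 ^ e i) = 0 ↔
        ∃ z : ℕ → ℕ, (∀ i, z i < 2 ^ c) ∧ x = ∑ i ∈ Finset.range n, z i * 2 ^ e i) := by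
  induction n with
  | zero =>
    intro p x _ hx
    simp only [Finset.range_zero, Finset.sum_empty, Nat.sub_zero, Nat.and_two_pow_sub_one_eq_mod]
    rw [Nat.mod_eq_of_lt hx]
    exact ⟨fun h => ⟨fun _ => 0, by simp, h⟩, fun ⟨_, _, h⟩ => h⟩
  | succ n ih =>
    intro p x hp hx
    have hlow : ∀ i < n, e i + c ≤ e n := fun i hi => (he i).trans
      ((monotone_nat_of_le_succ fun i => (Nat.le_add_right _ _).trans (he i)) (by omega))
    have h1 := mask_lt he n (e n) hlow
    obtain ⟨q, rfl⟩ := Nat.exists_eq_add_of_le ((Nat.le_add_right _ _).trans (hp n (by omega)))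
    have hcq : c ≤ q := by have := hp n (by omega); omega
    have hpos : 0 < 2 ^ e n := by positivity
    have hxq : x / 2 ^ e n < 2 ^ q := by
      rw [Nat.div_lt_iff_lt_mul hpos, mul_comm, ← pow_add]; exact hx
    have h2 : 2 ^ (e n + q) - 1 - ∑ i ∈ Finset.range (n + 1), (2 ^ c - 1) * 2 ^ e i =
        (2 ^ e n - 1 - ∑ i ∈ Finset.range n, (2 ^ c - 1) * 2 ^ e i) +
          2 ^ e n * (2 ^ q - 2 ^ c) := by
      rw [Finset.sum_range_succ, pow_add, Nat.mul_sub]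
      have h3 : (2 ^ c - 1) * 2 ^ e n + 2 ^ e n = 2 ^ e n * 2 ^ c := by
        rw [Nat.sub_mul, one_mul, Nat.sub_add_cancel (Nat.le_mul_of_pos_left _ (by positivity)),
          mul_comm]
      have h4 : 2 ^ e n * 2 ^ c ≤ 2 ^ e n * 2 ^ q :=
        Nat.mul_le_mul_left _ (Nat.pow_le_pow_right (by norm_num) hcq)
      omega
    rw [h2]
    nth_rewrite 1 [← Nat.mod_add_div x (2 ^ e n)]
    rw [land_split (Nat.mod_lt _ hpos) (by omega),
      ih (e n) (x % 2 ^ e n) hlow (Nat.mod_lt _ hpos), land_two_pow_sub_two_pow hcq hxq]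
    constructor
    · rintro ⟨⟨z, hz, hxz⟩, hd⟩
      refine ⟨Function.update z n (x / 2 ^ e n), ?_, ?_⟩
      · intro i
        by_cases hi : i = n
        · subst hi; simpa using hd
        · simpa [hi] using hz i
      · rw [Finset.sum_range_succ, Function.update_self]
        rw [Finset.sum_congr rfl (g := fun i => z i * 2 ^ e i) (by
          intro i hi
          rw [Function.update_of_ne (Finset.mem_range.mp hi).ne])]
        rw [← hxz, mul_comm, Nat.mod_add_div]
    · rintro ⟨z, hz, hxz⟩
      rw [Finset.sum_range_succ] at hxz
      have h3 : ∑ i ∈ Finset.range n, z i * 2 ^ e i < 2 ^ e n := by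
        refine lt_of_le_of_lt (Finset.sum_le_sum fun i _ => Nat.mul_le_mul_right _ ?_) h1
        have := hz i; omega
      rw [hxz, Nat.add_mul_mod_self_right, Nat.mod_eq_of_lt h3, Nat.add_mul_div_right _ _ hpos,
        Nat.div_eq_of_lt h3, zero_add]
      exact ⟨⟨z, hz, rfl⟩, hz n⟩

/-! ### Coding polynomials -/

section Coding
variable {ν : ℕ}

/-- Multi-indices of total degree exactly `δ` in `ν + 2` homogeneous variables. -/
def idx (ν δ : ℕ) : Finset (Option (Fin (ν + 1)) → ℕ) := Finset.piAntidiag Finset.univ δ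

/-- The exponent of the base `B` attached to a variable: `(δ + 1) ^ i` for `x_i`, and `0` for the
homogenising variable `none`. -/
def nexp (δ : ℕ) : Option (Fin (ν + 1)) → ℕ
  | none => 0
  | some i => (δ + 1) ^ (i : ℕ)

/-- The exponent of `B` attached to a monomial of degree `δ`. Its digits in base `δ + 1` are the
exponents of `x₀, …, x_ν`, so it determines the monomial. -/
def ecode (δ : ℕ) (k : Option (Fin (ν + 1)) → ℕ) : ℕ := ∑ i, k i * nexp δ i

/-- The exponents of a homogenised monomial with the homogenising variable set to `1`. -/
noncomputable def restr (k : Option (Fin (ν + 1)) → ℕ) : Fin (ν + 1) →₀ ℕ :=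
  Finsupp.equivFunOnFinite.symm fun i => k (some i)

/-- The coefficient of `P` multiplied by the factorials of the exponents, so that its product with
the multinomial coefficient is `δ!` times the coefficient. -/
noncomputable def dcoef (P : MvPolynomial (Fin (ν + 1)) ℤ) (k : Option (Fin (ν + 1)) → ℕ) : ℤ :=
  (∏ i, (k i).factorial : ℕ) * P.coeff (restr k)

/-- An upper bound for all `ecode δ k` with `k` of degree `δ`, and the exponent of `B` at which
the value of `P` appears. -/
def bigL (ν δ : ℕ) : ℕ := (δ + 1) ^ (ν + 1)

/-- The polynomial in `B` that carries the coefficients of `P` in the positions opposite to those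
of the monomials. -/
noncomputable def cD {R : Type*} [CommRing R] (P : MvPolynomial (Fin (ν + 1)) ℤ) (δ : ℕ) (B : R) : R :=
  ∑ k ∈ idx ν δ, (dcoef P k : R) * B ^ (bigL ν δ - ecode δ k)

/-- The sum of the absolute values of the coefficients of `cD`. -/
noncomputable def cΔ (P : MvPolynomial (Fin (ν + 1)) ℤ) (δ : ℕ) : ℕ := ∑ k ∈ idx ν δ, (dcoef P k).natAbs

lemma sum_idx {δ : ℕ} {k : Option (Fin (ν + 1)) → ℕ} (hk : k ∈ idx ν δ) :
    k none + ∑ i, k (some i) = δ := by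
  rw [idx, Finset.mem_piAntidiag] at hk
  rw [← hk.1, Fintype.sum_option]

lemma le_of_idx {δ : ℕ} {k : Option (Fin (ν + 1)) → ℕ} (hk : k ∈ idx ν δ) (i : Fin (ν + 1)) :
    k (some i) < δ + 1 := by
  have := sum_idx hk
  have := Finset.single_le_sum (f := fun i => k (some i)) (fun _ _ => Nat.zero_le _)
    (Finset.mem_univ i)
  omega

lemma ecode_eq {δ : ℕ} {k : Option (Fin (ν + 1)) → ℕ} (hk : k ∈ idx ν δ) :
    ecode δ k = finFunctionFinEquiv fun i => (⟨k (some i), le_of_idx hk i⟩ : Fin (δ + 1)) := by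
  rw [finFunctionFinEquiv_apply, ecode, Fintype.sum_option]
  simp [nexp]

lemma ecode_lt {δ : ℕ} {k : Option (Fin (ν + 1)) → ℕ} (hk : k ∈ idx ν δ) :
    ecode δ k < bigL ν δ := by
  rw [ecode_eq hk]; exact Fin.is_lt _

lemma ecode_inj {δ : ℕ} {k m : Option (Fin (ν + 1)) → ℕ} (hk : k ∈ idx ν δ) (hm : m ∈ idx ν δ)
    (h : ecode δ k = ecode δ m) : k = m := by
  rw [ecode_eq hk, ecode_eq hm] at h
  have h1 := finFunctionFinEquiv.injective (Fin.ext h)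
  have h2 : ∀ i, k (some i) = m (some i) := fun i => by
    have := congrFun h1 i
    simpa using this
  funext i
  rcases i with _ | i
  · have e1 := sum_idx hk
    have e2 := sum_idx hm
    rw [Finset.sum_congr rfl (fun i _ => h2 i)] at e1
    omega
  · exact h2 i

/-- A polynomial of degree at most `δ` as a sum over the homogenised monomials of degree exactly
`δ`. -/
lemma eval_eq_idx {P : MvPolynomial (Fin (ν + 1)) ℤ} {δ : ℕ} (hP : P.totalDegree ≤ δ)
    (y : Option (Fin (ν + 1)) → ℤ) (hy : y none = 1) :
    ∑ k ∈ idx ν δ, P.coeff (restr k) * ∏ i, y i ^ k i = eval (fun i => y (some i)) P := by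
  classical
  rw [eval_eq']
  symm
  have key : ∀ m : Fin (ν + 1) →₀ ℕ, ∀ (c : ℕ),
      restr (fun o : Option (Fin (ν + 1)) => o.elim c m) = m := by
    intro m c; ext i; simp [restr]
  refine Finset.sum_of_injOn
    (fun m o => Option.elim o (δ - ∑ i, m i) m) ?_ ?_ ?_ ?_
  · intro m _ m' _ h
    have := congrArg restr h
    simp only at this
    rwa [key, key] at this
  · intro m hm
    have h1 : ∑ i, m i ≤ δ := by
      have := le_totalDegree (Finset.mem_coe.mp hm)
      rw [Finsupp.sum_fintype _ _ (fun _ => rfl)] at this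
      exact this.trans hP
    rw [Finset.mem_coe, idx, Finset.mem_piAntidiag]
    refine ⟨?_, by simp⟩
    simp only [Fintype.sum_option, Option.elim_none, Option.elim_some]
    omega
  · intro k hk hk'
    have : P.coeff (restr k) = 0 := by
      by_contra h
      apply hk'
      refine ⟨restr k, Finset.mem_coe.mpr (mem_support_iff.mpr h), ?_⟩
      have := sum_idx hk
      funext o
      rcases o with _ | i
      · simp [restr]; omega
      · simp [restr]
    rw [this, zero_mul]
  · intro m _
    simp only [key, Fintype.prod_option, Option.elim_none, Option.elim_some, hy, one_pow, one_mul]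

/-- The coefficients of the coding polynomial `c ^ δ * D`. -/
noncomputable def kap (P : MvPolynomial (Fin (ν + 1)) ℤ) (δ : ℕ) (y : Option (Fin (ν + 1)) → ℤ) (j : ℕ) : ℤ :=
  ∑ p ∈ idx ν δ ×ˢ idx ν δ with ecode δ p.1 + (bigL ν δ - ecode δ p.2) = j,
    (Nat.multinomial Finset.univ p.1 * ∏ i, y i ^ p.1 i) * dcoef P p.2

/-- The numbers `kap` are the coefficients of `(∑ y_i B ^ nexp i) ^ δ * cD` as a polynomial in
`B`. -/
lemma coding_expand (P : MvPolynomial (Fin (ν + 1)) ℤ) (δ : ℕ) (y : Option (Fin (ν + 1)) → ℤ)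
    (B : ℤ) {M : ℕ} (hM : 2 * bigL ν δ < M) :
    (∑ i, y i * B ^ nexp δ i) ^ δ * cD P δ B = ∑ j ∈ Finset.range M, kap P δ y j * B ^ j := by
  have h1 : ∀ k : Option (Fin (ν + 1)) → ℕ,
      ∏ i, (y i * B ^ nexp δ i) ^ k i = (∏ i, y i ^ k i) * B ^ ecode δ k := by
    intro k
    rw [ecode, ← Finset.prod_pow_eq_pow_sum, ← Finset.prod_mul_distrib]
    refine Finset.prod_congr rfl fun i _ => ?_
    rw [mul_pow, ← pow_mul, mul_comm (k i)]
  rw [Finset.sum_pow_eq_sum_piAntidiag, cD, ← idx, Finset.sum_mul_sum, ← Finset.sum_product']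
  have hmaps : ∀ p ∈ idx ν δ ×ˢ idx ν δ,
      ecode δ p.1 + (bigL ν δ - ecode δ p.2) ∈ Finset.range M := by
    intro p hp
    have := ecode_lt (Finset.mem_product.mp hp).1
    rw [Finset.mem_range]; omega
  rw [← Finset.sum_fiberwise_of_maps_to hmaps]
  refine Finset.sum_congr rfl fun j _ => ?_
  rw [kap, Finset.sum_mul]
  refine Finset.sum_congr rfl fun p hp => ?_
  rw [← (Finset.mem_filter.mp hp).2, h1, pow_add]
  simp only [Int.cast_id]
  ring

/-- Only pairs of equal monomials contribute to position `L`, because `ecode` is injective; their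
contribution is `δ!` times a term of `P`. -/
lemma kap_bigL {P : MvPolynomial (Fin (ν + 1)) ℤ} {δ : ℕ} (hP : P.totalDegree ≤ δ)
    (y : Option (Fin (ν + 1)) → ℤ) (hy : y none = 1) :
    kap P δ y (bigL ν δ) = δ.factorial * eval (fun i => y (some i)) P := by
  rw [← eval_eq_idx hP y hy, Finset.mul_sum, kap]
  symm
  refine Finset.sum_of_injOn (fun k => (k, k)) ?_ ?_ ?_ ?_
  · intro k _ m _ h
    exact (Prod.ext_iff.mp h).1
  · intro k hk
    have hk' := Finset.mem_coe.mp hk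
    have := ecode_lt hk'
    simp only [Finset.coe_filter, Finset.mem_product, Set.mem_ofPred_eq]
    exact ⟨⟨hk', hk'⟩, by omega⟩
  · rintro ⟨k, m⟩ hp hn
    exfalso
    obtain ⟨h1, h2⟩ := Finset.mem_filter.mp hp
    obtain ⟨hk, hm⟩ := Finset.mem_product.mp h1
    have := ecode_lt hm
    have := ecode_lt hk
    simp only at h2 hk hm this
    have : k = m := ecode_inj hk hm (by omega)
    exact hn ⟨k, Finset.mem_coe.mpr hk, by rw [this]⟩
  · intro k hk
    have h1 := Nat.multinomial_spec Finset.univ k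
    rw [idx, Finset.mem_piAntidiag] at hk
    rw [hk.1] at h1
    rw [dcoef, ← h1]
    push_cast
    ring

/-- The bound is the value of the coding polynomial at `B = 1` with the coefficients replaced by
absolute values. -/
lemma abs_kap_le (P : MvPolynomial (Fin (ν + 1)) ℤ) (δ : ℕ) (y : Option (Fin (ν + 1)) → ℤ)
    (hy : ∀ i, 0 ≤ y i) (j : ℕ) : |kap P δ y j| ≤ (∑ i, y i) ^ δ * cΔ P δ := by
  rw [kap, Finset.sum_pow_eq_sum_piAntidiag, ← idx, cΔ, Nat.cast_sum, Finset.sum_mul_sum,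
    ← Finset.sum_product']
  refine (Finset.abs_sum_le_sum_abs _ _).trans ?_
  have h0 : ∀ k : Option (Fin (ν + 1)) → ℕ,
      0 ≤ (Nat.multinomial Finset.univ k : ℤ) * ∏ i, y i ^ k i := fun k =>
    mul_nonneg (by positivity) (Finset.prod_nonneg fun i _ => pow_nonneg (hy i) _)
  refine (Finset.sum_le_sum_of_subset_of_nonneg (Finset.filter_subset _ _)
    (fun _ _ _ => abs_nonneg _)).trans (Finset.sum_le_sum fun p _ => ?_)
  rw [abs_mul, abs_of_nonneg (h0 _), Int.natCast_natAbs]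

lemma abs_cD_le (P : MvPolynomial (Fin (ν + 1)) ℤ) (δ : ℕ) {B : ℤ} (hB : 1 ≤ B) :
    |cD P δ B| ≤ cΔ P δ * B ^ bigL ν δ := by
  rw [cD, cΔ, Nat.cast_sum, Finset.sum_mul]
  refine (Finset.abs_sum_le_sum_abs _ _).trans (Finset.sum_le_sum fun k _ => ?_)
  rw [abs_mul, abs_of_nonneg (by positivity : 0 ≤ B ^ (bigL ν δ - ecode δ k)), Int.natCast_natAbs,
    Int.cast_id]
  exact mul_le_mul_of_nonneg_left (pow_le_pow_right₀ hB (Nat.sub_le _ _)) (abs_nonneg _)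

end Coding

/-! ### The numbers carrying the code -/

section Numeric
variable {ν : ℕ} {R : Type*} [CommRing R]

/-- The number `b`, bounding the unknowns of `P` after squaring. The residue `2a + 2` modulo `4a +
3` contains powers of two, yet `|b|` cannot be small compared with `a`. -/
def kb (a f : R) : R := 2 * a + 2 + (4 * a + 3) * f
/-- Half of the base of the code. -/
def kH (δ β : ℕ) (b : R) : R := β * b ^ (2 * δ)
/-- The base of the code; the factor `b ^ (2δ)` makes it exceed all coefficients of the coding
polynomial. -/
def kB (δ β : ℕ) (b : R) : R := 2 * kH δ β b
/-- The number of digits that receive an offset in `kK`. -/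
def kM (ν δ : ℕ) : ℕ := (bigL ν δ + 1) * (δ + 1) + 1
/-- The coding polynomial at `B`, with `H = B / 2` added to each coefficient so that the
coefficients `κ_j + H` are genuine digits in base `B`. -/
noncomputable def kK (P : MvPolynomial (Fin (ν + 1)) ℤ) (δ β : ℕ) (b a g : R) : R :=
  (a * kB δ β b + g) ^ δ * cD P δ (kB δ β b) +
    kH δ β b * ∑ j ∈ Finset.range (kM ν δ), kB δ β b ^ j
/-- The bound `B ^ L` for `g`. -/
def kN₀ (ν δ β : ℕ) (b : R) : R := kB δ β b ^ bigL ν δ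
/-- A bound for the numbers `kS` and `kT`. -/
def kN (ν δ β : ℕ) (b : R) : R := kB δ β b ^ (bigL ν δ + (kM ν δ + 1))
/-- The concatenation of `g - 1` and `K`. -/
noncomputable def kS (P : MvPolynomial (Fin (ν + 1)) ℤ) (δ β : ℕ) (b a g : R) : R :=
  g - 1 + kN₀ ν δ β b * kK P δ β b a g
/-- The complement of the mask of binary positions that `g - 1` may occupy, namely those below
`b²` in the digits `(δ + 1) ^ (i + 1)` in base `B`. -/
def kT₀ (ν δ β : ℕ) (b : R) : R :=
  kN₀ ν δ β b - 1 - (b ^ 2 - 1) * ∑ i ∈ Finset.range ν, kB δ β b ^ (δ + 1) ^ (i + 1)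
/-- The concatenation of `T₀` with a mask of all bits but the top one in the digit of `K` at
position `L`. Digitwise disjointness from `kS` says that `g` codes a tuple of unknowns at which
`P` vanishes. -/
def kT (ν δ β : ℕ) (b : R) : R :=
  kT₀ ν δ β b + kN₀ ν δ β b * ((kH δ β b - 1) * kB δ β b ^ bigL ν δ)
/-- The number `X` for which `central_iff_land` turns disjointness of `S` and `T` into a
divisibility of `(2X).choose X` by `N²`. -/
noncomputable def kX (P : MvPolynomial (Fin (ν + 1)) ℤ) (δ β : ℕ) (b a g : R) : R :=
  (kS P δ β b a g + kT ν δ β b) * kN ν δ β b ^ 2 +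
    (kN ν δ β b - 1 - kS P δ β b a g) * kN ν δ β b + (kN ν δ β b - 1 - kT ν δ β b)
/-- The divisor `N²` of the central binomial coefficient. -/
def kY (ν δ β : ℕ) (b : R) : R := kN ν δ β b ^ 2

/-- A number whose nonzero digits in base `B` sit at the positions `(δ + 1) ^ (i + 1)`, `i < n`,
stays below `B ^ (δ + 1) ^ (n + 1)` with room for `g = 1 + …`. -/
lemma digits_add_two_le {B : ℤ} {δ : ℕ} (hB : 2 ≤ B) (hδ : 1 ≤ δ) {z : ℕ → ℤ}
    (hz : ∀ i, z i ≤ B - 1) (n : ℕ) :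
    ∑ i ∈ Finset.range n, z i * B ^ (δ + 1) ^ (i + 1) + 2 ≤ B ^ (δ + 1) ^ (n + 1) := by
  induction n with
  | zero =>
    simp only [Finset.range_zero, Finset.sum_empty, zero_add, pow_one]
    calc 2 ≤ B ^ 1 := by simpa using hB
      _ ≤ _ := pow_le_pow_right₀ (by omega) (by omega)
  | succ n ih =>
    rw [Finset.sum_range_succ]
    have h1 : z n * B ^ (δ + 1) ^ (n + 1) ≤ (B - 1) * B ^ (δ + 1) ^ (n + 1) :=
      mul_le_mul_of_nonneg_right (hz n) (by positivity)
    have h2 : B ^ ((δ + 1) ^ (n + 1) + 1) ≤ B ^ (δ + 1) ^ (n + 1 + 1) := by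
      refine pow_le_pow_right₀ (by omega) ?_
      have : 0 < (δ + 1) ^ (n + 1) := by positivity
      rw [pow_succ _ (n + 1)]
      nlinarith
    rw [pow_succ] at h2
    linarith

lemma geom_lt {B : ℤ} (hB : 2 ≤ B) (n : ℕ) : ∑ j ∈ Finset.range n, B ^ j < B ^ n := by
  induction n with
  | zero => simp
  | succ n ih =>
    rw [Finset.sum_range_succ, pow_succ]
    have : 0 < B ^ n := by positivity
    nlinarith

/-- Whatever the integer `f`, one has `|b| ≥ 2a + 1`. -/
lemma kb_bounds (a : ℕ) (f : ℤ) : kb (a : ℤ) f ≠ 0 ∧ (a : ℤ) ≤ kb (a : ℤ) f ^ 2 := by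
  have h : (a : ℤ) < |kb (a : ℤ) f| := by
    rw [lt_abs, kb]
    rcases le_or_gt 0 f with h | h
    · left; nlinarith
    · right; nlinarith
  have h0 : kb (a : ℤ) f ≠ 0 := by
    intro h0; rw [h0] at h; simp at h; omega
  refine ⟨h0, ?_⟩
  have := Int.one_le_abs h0
  rw [← sq_abs]
  nlinarith

/-- Modulo `4a + 3`, the number `2a + 2` is the inverse of `2`, so by Euler it is congruent to
arbitrarily large powers of two. -/
lemma exists_kb (a Z : ℕ) : ∃ (f : ℤ) (t : ℕ), kb (a : ℤ) f = 2 ^ t ∧ (Z : ℤ) < kb (a : ℤ) f ^ 2 := by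
  have hco : Nat.Coprime 2 (4 * a + 3) := by
    rw [Nat.coprime_two_left]; exact ⟨2 * a + 1, by ring⟩
  have h1 := (Nat.ModEq.pow_totient hco).pow (Z + 1)
  rw [← pow_mul, one_pow] at h1
  obtain ⟨u, hu⟩ : ∃ u, Nat.totient (4 * a + 3) * (Z + 1) = u + 1 :=
    ⟨Nat.totient (4 * a + 3) * (Z + 1) - 1, by
      have : 0 < Nat.totient (4 * a + 3) * (Z + 1) :=
        Nat.mul_pos (Nat.totient_pos.mpr (by omega)) (by omega)
      omega⟩
  have huZ : Z ≤ u := by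
    have : 1 ≤ Nat.totient (4 * a + 3) := Nat.totient_pos.mpr (by omega)
    nlinarith
  rw [hu] at h1
  have h2 : ((4 * a + 3 : ℕ) : ℤ) ∣ 2 ^ (u + 1) - 1 := by
    have := (Nat.modEq_iff_dvd.mp h1.symm)
    push_cast at this ⊢
    exact this
  have h3 : ((4 * a + 3 : ℕ) : ℤ) ∣ 2 ^ u - (2 * a + 2) := by
    have hc : IsCoprime ((4 * a + 3 : ℕ) : ℤ) 2 := by
      have := (Nat.isCoprime_iff_coprime.mpr hco).symm
      exact_mod_cast this
    refine hc.dvd_of_dvd_mul_left ?_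
    have : (2 : ℤ) * (2 ^ u - (2 * a + 2)) = (2 ^ (u + 1) - 1) - ((4 * a + 3 : ℕ) : ℤ) := by
      push_cast; ring
    rw [this]
    exact dvd_sub h2 dvd_rfl
  obtain ⟨f, hf⟩ := h3
  have hk : kb (a : ℤ) f = 2 ^ u := by
    rw [kb]; push_cast at hf; linarith
  refine ⟨f, u, hk, ?_⟩
  rw [hk]
  have h4 : (Z : ℤ) < 2 ^ Z := by exact_mod_cast Nat.lt_two_pow_self
  have h5 : (2 : ℤ) ^ Z ≤ 2 ^ u := pow_le_pow_right₀ (by norm_num) huZ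
  have h6 : (1 : ℤ) ≤ 2 ^ u := one_le_pow₀ (by norm_num)
  nlinarith

section
variable {P : MvPolynomial (Fin (ν + 1)) ℤ} {δ β : ℕ} {b a g : ℤ}

lemma kH_bounds (hδ : 1 ≤ δ) (hβ : 1 ≤ β) (hb : b ≠ 0) :
    b ^ 2 ≤ kH δ β b ∧ 1 ≤ b ^ 2 ∧ (β : ℤ) ≤ kH δ β b := by
  have h1 : 1 ≤ b ^ 2 := by
    have := sq_pos_of_ne_zero hb
    omega
  have h2 : b ^ 2 ≤ b ^ (2 * δ) := by
    rw [pow_mul]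
    exact le_self_pow₀ h1 (by omega)
  have hβ' : (1 : ℤ) ≤ β := by exact_mod_cast hβ
  refine ⟨?_, h1, ?_⟩ <;> rw [kH] <;> nlinarith

/-- These bounds hold for every `g` in range, whether or not it codes a tuple, so that `X` and `Y`
are always meaningful. -/
lemma kK_bounds (hδ : 1 ≤ δ) (hβ : cΔ P δ < β) (hb : b ≠ 0) (ha : 0 ≤ a)
    (hab : a ≤ b ^ 2) (hg : 0 < g) (hgN : g < kN₀ ν δ β b) :
    0 ≤ kK P δ β b a g ∧ kK P δ β b a g < kB δ β b ^ (kM ν δ + 1) := by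
  obtain ⟨h1, h2, h3⟩ := kH_bounds hδ (by omega : 1 ≤ β) hb
  have hBH : kB δ β b = 2 * kH δ β b := rfl
  have hD := abs_cD_le P δ (by omega : 1 ≤ kB δ β b)
  rw [kK]
  rw [kN₀] at hgN
  set B := kB δ β b
  set H := kH δ β b
  set L := bigL ν δ with hL
  have hL1 : 1 ≤ L := Nat.one_le_iff_ne_zero.mpr (by rw [hL, bigL]; positivity)
  have hBL : B ≤ B ^ L := le_self_pow₀ (by omega) (by omega)
  have hc : |a * B + g| ≤ B ^ (L + 1) := by
    rw [abs_of_nonneg (by nlinarith), pow_succ]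
    nlinarith
  have hprod : |(a * B + g) ^ δ * cD P δ B| ≤ H * B ^ ((L + 1) * (δ + 1) - 1) := by
    rw [abs_mul, abs_pow]
    have e : B ^ ((L + 1) * (δ + 1) - 1) = (B ^ (L + 1)) ^ δ * B ^ L := by
      rw [← pow_mul, ← pow_add]; congr 1
    rw [e]
    have hΔ : (cΔ P δ : ℤ) ≤ H := by
      have : (cΔ P δ : ℤ) < β := by exact_mod_cast hβ
      omega
    calc |a * B + g| ^ δ * |cD P δ B| ≤ (B ^ (L + 1)) ^ δ * (cΔ P δ * B ^ L) := by
          refine mul_le_mul (pow_le_pow_left₀ (abs_nonneg _) hc _) hD (abs_nonneg _) ?_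
          exact pow_nonneg (pow_nonneg (by omega) _) _
      _ ≤ (B ^ (L + 1)) ^ δ * (H * B ^ L) := by
          refine mul_le_mul_of_nonneg_left ?_ (pow_nonneg (pow_nonneg (by omega) _) _)
          exact mul_le_mul_of_nonneg_right hΔ (pow_nonneg (by omega) _)
      _ = _ := by ring
  have hsingle : B ^ ((L + 1) * (δ + 1) - 1) ≤ ∑ j ∈ Finset.range (kM ν δ), B ^ j := by
    refine Finset.single_le_sum (f := fun j => B ^ j) (fun j _ => pow_nonneg (by omega) _) ?_
    rw [Finset.mem_range, kM, ← hL]; omega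
  have hle : |(a * B + g) ^ δ * cD P δ B| ≤ H * ∑ j ∈ Finset.range (kM ν δ), B ^ j :=
    hprod.trans (mul_le_mul_of_nonneg_left hsingle (by omega))
  have hgeom := geom_lt (by omega : 2 ≤ B) (kM ν δ)
  rw [abs_le] at hle
  rw [pow_succ]
  constructor
  · linarith [hle.1]
  · nlinarith [hle.2, mul_lt_mul_of_pos_left hgeom (by omega : 0 < B)]

lemma kT₀_bounds (hδ : 1 ≤ δ) (hβ : 1 ≤ β) (hb : b ≠ 0) :
    0 ≤ kT₀ ν δ β b ∧ kT₀ ν δ β b < kN₀ ν δ β b := by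
  obtain ⟨h1, h2, h3⟩ := kH_bounds hδ hβ hb
  have hBH : kB δ β b = 2 * kH δ β b := rfl
  have h := digits_add_two_le (by omega : 2 ≤ kB δ β b) hδ (z := fun _ => b ^ 2 - 1)
    (fun _ => by omega) ν
  rw [← Finset.mul_sum] at h
  have h5 : 0 ≤ (b ^ 2 - 1) * ∑ i ∈ Finset.range ν, kB δ β b ^ (δ + 1) ^ (i + 1) :=
    mul_nonneg (by omega) (Finset.sum_nonneg fun i _ => pow_nonneg (by omega) _)
  rw [kT₀, kN₀, bigL]
  constructor <;> linarith

lemma lt_of_digits {x y U V : ℤ} (hx : x < U) (hy : y < V) (hU : 0 ≤ U) :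
    x + U * y < U * V := by
  nlinarith [mul_le_mul_of_nonneg_left (by omega : y + 1 ≤ V) hU]

lemma kST_bounds (hδ : 1 ≤ δ) (hβ : cΔ P δ < β) (hb : b ≠ 0) (ha : 0 ≤ a)
    (hab : a ≤ b ^ 2) (hg : 0 < g) (hgN : g < kN₀ ν δ β b) :
    (0 ≤ kS P δ β b a g ∧ kS P δ β b a g < kN ν δ β b) ∧
      (0 ≤ kT ν δ β b ∧ kT ν δ β b < kN ν δ β b) ∧ 2 ≤ kN ν δ β b ∧ b ^ 2 ≤ kN ν δ β b ∧
      kN₀ ν δ β b ≤ kN ν δ β b := by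
  obtain ⟨h1, h2, h3⟩ := kH_bounds hδ (by omega : 1 ≤ β) hb
  obtain ⟨hK0, hK1⟩ := kK_bounds hδ hβ hb ha hab hg hgN
  obtain ⟨hT0, hT1⟩ := kT₀_bounds (ν := ν) hδ (by omega : 1 ≤ β) hb
  have hBH : kB δ β b = 2 * kH δ β b := rfl
  have hB : 2 ≤ kB δ β b := by omega
  have hN0 : 1 ≤ kN₀ ν δ β b := by omega
  have hN : kN ν δ β b = kN₀ ν δ β b * kB δ β b ^ (kM ν δ + 1) := by rw [kN, kN₀, pow_add]
  have hBN : kB δ β b ≤ kN ν δ β b := le_self_pow₀ (by omega) (by omega)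
  have hmask0 : 0 ≤ (kH δ β b - 1) * kB δ β b ^ bigL ν δ :=
    mul_nonneg (by omega) (pow_nonneg (by omega) _)
  have hmask : (kH δ β b - 1) * kB δ β b ^ bigL ν δ < kB δ β b ^ (kM ν δ + 1) := by
    calc (kH δ β b - 1) * kB δ β b ^ bigL ν δ < kB δ β b * kB δ β b ^ bigL ν δ :=
          mul_lt_mul_of_pos_right (by omega) (pow_pos (by omega) _)
      _ = kB δ β b ^ (bigL ν δ + 1) := by ring
      _ ≤ _ := pow_le_pow_right₀ (by omega) (by rw [kM]; nlinarith)
  refine ⟨⟨?_, ?_⟩, ⟨?_, ?_⟩, by omega, by omega, ?_⟩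
  · rw [kS]; nlinarith
  · rw [kS, hN]; exact lt_of_digits (by omega) hK1 (by omega)
  · rw [kT]; nlinarith
  · rw [kT, hN]; exact lt_of_digits hT1 hmask (by omega)
  · exact pow_le_pow_right₀ (by omega) (by omega)

lemma kX_bounds (hδ : 1 ≤ δ) (hβ : cΔ P δ < β) (hb : b ≠ 0) (ha : 0 ≤ a)
    (hab : a ≤ b ^ 2) (hg : 0 < g) (hgN : g < kN₀ ν δ β b) :
    1 ≤ kX P δ β b a g ∧ b ^ 2 ≤ kX P δ β b a g + 1 ∧ 4 ≤ kY ν δ β b ∧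
      kN₀ ν δ β b ≤ kY ν δ β b := by
  obtain ⟨⟨s0, s1⟩, ⟨t0, t1⟩, n2, nb, nn⟩ := kST_bounds hδ hβ hb ha hab hg hgN
  have hX : kN ν δ β b - 1 ≤ kX P δ β b a g := by
    rw [kX]
    set S := kS P δ β b a g
    set T := kT ν δ β b
    set N := kN ν δ β b
    nlinarith [mul_nonneg (mul_nonneg s0 (by omega : 0 ≤ N)) (by omega : 0 ≤ N - 1),
      mul_nonneg t0 (by nlinarith : 0 ≤ N ^ 2 - 1), mul_nonneg (by omega : 0 ≤ N - 1) (by omega : 0 ≤ N - 1)]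
  refine ⟨by omega, by omega, ?_, ?_⟩ <;> rw [kY] <;> nlinarith

end
end Numeric

/-! ### Decoding -/

section CodeIff
variable {ν : ℕ}

lemma land_mask_shift {K h r : ℕ} :
    K &&& ((2 ^ h - 1) * 2 ^ r) = 0 ↔ (K / 2 ^ r) % 2 ^ h = 0 := by
  have h1 := land_split (p := r) (x := K % 2 ^ r) (x' := K / 2 ^ r) (y := 0) (y' := 2 ^ h - 1)
    (Nat.mod_lt _ (by positivity)) (by positivity)
  rw [Nat.mod_add_div, zero_add, mul_comm (2 ^ r) (2 ^ h - 1)] at h1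
  rw [h1, Nat.and_two_pow_sub_one_eq_mod]
  simp

lemma digit_div {B : ℤ} (hB : 2 ≤ B) {D : ℕ → ℤ} (hD0 : ∀ j, 0 ≤ D j) (hD : ∀ j, D j < B)
    (L M : ℕ) : ∃ q, (∑ j ∈ Finset.range (L + 1 + M), D j * B ^ j) / B ^ L = D L + B * q := by
  have hlow : ∀ n, ∑ j ∈ Finset.range n, D j * B ^ j < B ^ n := by
    intro n
    induction n with
    | zero => simp
    | succ n ih =>
      rw [Finset.sum_range_succ, pow_succ]
      have : 0 < B ^ n := by positivity
      nlinarith [hD n]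
  have h0 : 0 ≤ ∑ j ∈ Finset.range L, D j * B ^ j :=
    Finset.sum_nonneg fun j _ => mul_nonneg (hD0 j) (by positivity)
  refine ⟨∑ i ∈ Finset.range M, D (L + 1 + i) * B ^ i, ?_⟩
  have e : ∑ j ∈ Finset.range (L + 1 + M), D j * B ^ j = ∑ j ∈ Finset.range L, D j * B ^ j +
      (D L + B * ∑ i ∈ Finset.range M, D (L + 1 + i) * B ^ i) * B ^ L := by
    rw [Finset.sum_range_add, Finset.sum_range_succ, add_mul, add_assoc]
    congr 2
    rw [Finset.mul_sum, Finset.sum_mul]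
    refine Finset.sum_congr rfl fun i _ => ?_
    rw [pow_add, pow_add]; ring
  rw [e, Int.add_mul_ediv_right _ _ (by positivity), Int.ediv_eq_zero_of_lt h0 (hlow L), zero_add]

/-- The homogenised assignment with coordinate `1` at `none`. -/
def yval (a : ℕ) (z : Fin ν → ℕ) (o : Option (Fin (ν + 1))) : ℤ :=
  o.elim 1 (Fin.cases (a : ℤ) fun i => (z i : ℤ))

lemma yval_sum (a : ℕ) (z : Fin ν → ℕ) (δ : ℕ) (B : ℤ) :
    ∑ o, yval a z o * B ^ nexp δ o = 1 + a * B + ∑ i : Fin ν, (z i : ℤ) * B ^ (δ + 1) ^ (i.val + 1) := by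
  rw [Fintype.sum_option, Fin.sum_univ_succ]
  simp [yval, nexp, add_assoc]

/-- When `g` codes `z`, the digit of `K` at position `L` is `H + κ` with `κ = δ! * P(a, z)` and
`|κ| < H`; it is divisible by `H = 2 ^ h` iff `κ = 0`. -/
lemma kappa_zero_iff {P : MvPolynomial (Fin (ν + 1)) ℤ} {δ β h : ℕ} {b g : ℤ} {a : ℕ}
    {z : Fin ν → ℕ} (hP : P.totalDegree ≤ δ) (hδ : 1 ≤ δ)
    (hβ : (ν + 2) ^ δ * cΔ P δ < β) (hβ1 : 1 ≤ β) (hb : b ≠ 0)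
    (hH : kH δ β b = 2 ^ h) (hab : (a : ℤ) ≤ b ^ 2) (hz : ∀ i, (z i : ℤ) < b ^ 2)
    (hg : g = 1 + ∑ i : Fin ν, (z i : ℤ) * kB δ β b ^ (δ + 1) ^ (i.val + 1)) {K : ℕ}
    (hK : (K : ℤ) = kK P δ β b a g) :
    (K / 2 ^ ((h + 1) * bigL ν δ)) % 2 ^ h = 0 ↔
      eval (Fin.cases (a : ℤ) fun i => (z i : ℤ)) P = 0 := by
  obtain ⟨h1, h2, h3⟩ := kH_bounds hδ hβ1 hb
  have hBH : kB δ β b = 2 * kH δ β b := rfl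
  have hB2 : kB δ β b = 2 ^ (h + 1) := by rw [hBH, hH, pow_succ']
  have hy0 : ∀ o, 0 ≤ yval a z o := by
    intro o
    rcases o with _ | i
    · simp [yval]
    · refine Fin.cases ?_ (fun i => ?_) i <;> simp [yval]
  have hysum : ∑ o, yval a z o ≤ (ν + 2) * b ^ 2 := by
    rw [Fintype.sum_option, Fin.sum_univ_succ]
    have : ∑ i : Fin ν, (z i : ℤ) ≤ ∑ i : Fin ν, b ^ 2 := Finset.sum_le_sum fun i _ => (hz i).le
    simp only [Finset.sum_const, Finset.card_univ, Fintype.card_fin, nsmul_eq_mul] at this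
    simp only [yval, Option.elim_none, Option.elim_some, Fin.cases_zero, Fin.cases_succ]
    nlinarith
  have hκ : ∀ j, |kap P δ (yval a z) j| < kH δ β b := by
    intro j
    have hβ' : ((ν : ℤ) + 2) ^ δ * cΔ P δ < β := by exact_mod_cast hβ
    calc |kap P δ (yval a z) j| ≤ (∑ o, yval a z o) ^ δ * cΔ P δ := abs_kap_le P δ _ hy0 j
      _ ≤ (((ν : ℤ) + 2) * b ^ 2) ^ δ * cΔ P δ :=
          mul_le_mul_of_nonneg_right
            (pow_le_pow_left₀ (Finset.sum_nonneg fun o _ => hy0 o) hysum _) (by positivity)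
      _ = ((ν : ℤ) + 2) ^ δ * cΔ P δ * b ^ (2 * δ) := by rw [mul_pow, ← pow_mul]; ring
      _ < β * b ^ (2 * δ) := mul_lt_mul_of_pos_right hβ' (by rw [pow_mul]; positivity)
      _ = kH δ β b := rfl
  have hL1 : 1 ≤ bigL ν δ := Nat.one_le_iff_ne_zero.mpr (by rw [bigL]; positivity)
  have hexp : (K : ℤ) = ∑ j ∈ Finset.range (kM ν δ),
      (kap P δ (yval a z) j + kH δ β b) * kB δ β b ^ j := by
    rw [hK, kK]
    have e : (a : ℤ) * kB δ β b + g = ∑ o, yval a z o * kB δ β b ^ nexp δ o := by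
      rw [yval_sum, hg]; ring
    rw [e, coding_expand P δ _ _ (M := kM ν δ) (by rw [kM]; nlinarith), Finset.mul_sum,
      ← Finset.sum_add_distrib]
    exact Finset.sum_congr rfl fun j _ => by ring
  obtain ⟨q, hq⟩ := digit_div (by omega : 2 ≤ kB δ β b)
    (D := fun j => kap P δ (yval a z) j + kH δ β b)
    (fun j => by have := neg_lt_of_abs_lt (hκ j); omega)
    (fun j => by have := lt_of_abs_lt (hκ j); omega) (bigL ν δ)
    ((bigL ν δ + 1) * δ + 1)
  rw [show bigL ν δ + 1 + ((bigL ν δ + 1) * δ + 1) = kM ν δ by rw [kM]; ring, ← hexp] at hq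
  have hkL := kap_bigL hP (yval a z) rfl
  have hev : (fun i => yval a z (some i)) = Fin.cases (a : ℤ) fun i => (z i : ℤ) := rfl
  rw [hev] at hkL
  have hmain : (K / 2 ^ ((h + 1) * bigL ν δ)) % 2 ^ h = 0 ↔
      kH δ β b ∣ kap P δ (yval a z) (bigL ν δ) := by
    rw [← Nat.dvd_iff_mod_eq_zero, ← Int.natCast_dvd_natCast, Int.natCast_ediv]
    push_cast
    rw [pow_mul, ← hB2, hq, ← hH, hBH]
    constructor
    · intro hd
      have := dvd_sub hd (Dvd.intro (1 + 2 * q) rfl : kH δ β b ∣ kH δ β b * (1 + 2 * q))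
      rwa [show kap P δ (yval a z) (bigL ν δ) + kH δ β b + 2 * kH δ β b * q -
        kH δ β b * (1 + 2 * q) = kap P δ (yval a z) (bigL ν δ) by ring] at this
    · intro hd
      have := dvd_add hd (Dvd.intro (1 + 2 * q) rfl : kH δ β b ∣ kH δ β b * (1 + 2 * q))
      rwa [show kap P δ (yval a z) (bigL ν δ) + kH δ β b * (1 + 2 * q) =
        kap P δ (yval a z) (bigL ν δ) + kH δ β b + 2 * kH δ β b * q by ring] at this
  rw [hmain]
  have hfact : (δ.factorial : ℤ) ≠ 0 := by exact_mod_cast (Nat.factorial_pos δ).ne'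
  constructor
  · intro hd
    have := Int.eq_zero_of_abs_lt_dvd hd (hκ _)
    rw [hkL] at this
    exact (mul_eq_zero.mp this).resolve_left hfact
  · intro h0
    rw [hkL, h0, mul_zero]
    exact dvd_zero _

set_option maxHeartbeats 1000000 in
/-- The divisibility says exactly that `g` codes a zero of `P` with entries less than `b²`. -/
theorem code_iff {P : MvPolynomial (Fin (ν + 1)) ℤ} {δ s t : ℕ} {b g : ℤ} {a : ℕ}
    (hP : P.totalDegree ≤ δ) (hδ : 1 ≤ δ) (hβ : (ν + 2) ^ δ * cΔ P δ < 2 ^ s)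
    (hb : b.natAbs = 2 ^ t) (hab : (a : ℤ) ≤ b ^ 2) (hg : 0 < g)
    (hgN : g < kN₀ ν δ (2 ^ s) b) :
    (kY ν δ (2 ^ s) b).toNat ∣
        (2 * (kX P δ (2 ^ s) b a g).toNat).choose (kX P δ (2 ^ s) b a g).toNat ↔
      ∃ z : Fin ν → ℕ, (∀ i, (z i : ℤ) < b ^ 2) ∧
        g = 1 + ∑ i : Fin ν, (z i : ℤ) * kB δ (2 ^ s) b ^ (δ + 1) ^ (i.val + 1) ∧
        eval (Fin.cases (a : ℤ) fun i => (z i : ℤ)) P = 0 := by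
  have hb0 : b ≠ 0 := by
    rintro rfl
    have : 0 < 2 ^ t := by positivity
    simp at hb; omega
  have hβ1 : 1 ≤ 2 ^ s := Nat.one_le_two_pow
  have hβΔ : cΔ P δ < 2 ^ s := by
    have : 1 ≤ (ν + 2) ^ δ := Nat.one_le_pow _ _ (by omega)
    nlinarith
  have hb2 : b ^ 2 = ((2 ^ (2 * t) : ℕ) : ℤ) := by
    rw [← Int.natAbs_sq, hb]; push_cast; rw [← pow_mul, mul_comm]
  set β := 2 ^ s with hβdef
  set h := s + 2 * t * δ with hh
  have hH : kH δ β b = 2 ^ h := by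
    rw [kH, pow_mul, hb2, hβdef, hh]; push_cast; rw [pow_add, pow_mul 2 (2 * t) δ]
  have hBH : kB δ β b = 2 * kH δ β b := rfl
  have hB2 : kB δ β b = 2 ^ (h + 1) := by rw [hBH, hH, pow_succ']
  obtain ⟨⟨s0, s1⟩, ⟨t0, t1⟩, -, -, -⟩ := kST_bounds hδ hβΔ hb0 (by positivity) hab hg hgN
  obtain ⟨K0, K1⟩ := kK_bounds hδ hβΔ hb0 (by positivity) hab hg hgN
  obtain ⟨U0, U1⟩ := kT₀_bounds (ν := ν) hδ hβ1 hb0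
  obtain ⟨S, hS⟩ := Int.eq_ofNat_of_zero_le s0
  obtain ⟨T, hT⟩ := Int.eq_ofNat_of_zero_le t0
  obtain ⟨K, hK⟩ := Int.eq_ofNat_of_zero_le K0
  obtain ⟨U, hU⟩ := Int.eq_ofNat_of_zero_le U0
  obtain ⟨γ, hγ⟩ := Int.eq_ofNat_of_zero_le (by omega : 0 ≤ g - 1)
  set m := (h + 1) * (bigL ν δ + (kM ν δ + 1)) with hm
  set r := (h + 1) * bigL ν δ with hr
  have hN : kN ν δ β b = ((2 ^ m : ℕ) : ℤ) := by rw [kN, hB2, ← pow_mul, hm]; push_cast; rfl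
  have hN0 : kN₀ ν δ β b = ((2 ^ r : ℕ) : ℤ) := by rw [kN₀, hB2, ← pow_mul, hr]; push_cast; rfl
  have hSm : S < 2 ^ m := by rw [hS, hN] at s1; exact_mod_cast s1
  have hTm : T < 2 ^ m := by rw [hT, hN] at t1; exact_mod_cast t1
  have hγr : γ < 2 ^ r := by
    have : ((γ : ℕ) : ℤ) < ((2 ^ r : ℕ) : ℤ) := by rw [← hN0]; omega
    exact_mod_cast this
  have hUr : U < 2 ^ r := by rw [hU, hN0] at U1; exact_mod_cast U1
  have hY : (kY ν δ β b).toNat = (2 ^ m) ^ 2 := by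
    rw [kY, hN]; norm_cast
  have hX : (kX P δ β b a g).toNat =
      (S + T) * (2 ^ m) ^ 2 + (2 ^ m - 1 - S) * 2 ^ m + (2 ^ m - 1 - T) := by
    rw [kX, hS, hT, hN]
    have e1 : ((2 ^ m : ℕ) : ℤ) - 1 - S = ((2 ^ m - 1 - S : ℕ) : ℤ) := by omega
    have e2 : ((2 ^ m : ℕ) : ℤ) - 1 - T = ((2 ^ m - 1 - T : ℕ) : ℤ) := by omega
    rw [e1, e2]
    norm_cast
  rw [hY, central_iff_land hSm hTm hX]
  have hS' : S = γ + 2 ^ r * K := by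
    have : (S : ℤ) = ((γ + 2 ^ r * K : ℕ) : ℤ) := by
      rw [← hS, kS, hγ, hN0, hK]; push_cast; ring
    exact_mod_cast this
  have hT' : T = U + 2 ^ r * ((2 ^ h - 1) * 2 ^ r) := by
    have e : ((2 ^ h - 1 : ℕ) : ℤ) = 2 ^ h - 1 := by
      rw [Nat.cast_sub Nat.one_le_two_pow]; push_cast; ring
    have : (T : ℤ) = ((U + 2 ^ r * ((2 ^ h - 1) * 2 ^ r) : ℕ) : ℤ) := by
      rw [← hT, kT, hU, hN0, hH, hB2, ← pow_mul, ← hr, Nat.cast_add, Nat.cast_mul, Nat.cast_mul, e]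
      push_cast; ring
    exact_mod_cast this
  rw [hS', hT', land_split hγr hUr, land_mask_shift]
  set e : ℕ → ℕ := fun i => (h + 1) * (δ + 1) ^ (i + 1) with he
  have hBe : ∀ i, kB δ β b ^ (δ + 1) ^ (i + 1) = 2 ^ e i := fun i => by
    rw [hB2, ← pow_mul]
  have h2t : 2 * t ≤ h := (Nat.le_mul_of_pos_right _ hδ).trans (Nat.le_add_left _ _)
  have hestep : ∀ i, e i + 2 * t ≤ e (i + 1) := by
    intro i
    have : 1 ≤ (δ + 1) ^ (i + 1) := Nat.one_le_pow _ _ (by omega)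
    simp only [he]
    rw [pow_succ _ (i + 1)]
    have h3 := Nat.mul_le_mul (Nat.mul_le_mul (by omega : 2 * t ≤ h + 1) this) hδ
    rw [mul_one, mul_one] at h3
    calc _ ≤ (h + 1) * (δ + 1) ^ (i + 1) + (h + 1) * (δ + 1) ^ (i + 1) * δ :=
          Nat.add_le_add_left h3 _
      _ = _ := by ring
  have hetop : ∀ i < ν, e i + 2 * t ≤ r := by
    intro i hi
    refine (hestep i).trans ?_
    simp only [he, hr, bigL]
    exact Nat.mul_le_mul_left _ (Nat.pow_le_pow_right (by omega) (by omega))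
  have hUmask : U = 2 ^ r - 1 - ∑ i ∈ Finset.range ν, (2 ^ (2 * t) - 1) * 2 ^ e i := by
    have h1 : (U : ℤ) + 1 + ((∑ i ∈ Finset.range ν, (2 ^ (2 * t) - 1) * 2 ^ e i : ℕ) : ℤ) =
        ((2 ^ r : ℕ) : ℤ) := by
      have e1 : ((2 ^ (2 * t) - 1 : ℕ) : ℤ) = b ^ 2 - 1 := by
        rw [hb2, Nat.cast_sub Nat.one_le_two_pow]; rfl
      have e2 : ((∑ i ∈ Finset.range ν, (2 ^ (2 * t) - 1) * 2 ^ e i : ℕ) : ℤ) =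
          (b ^ 2 - 1) * ∑ i ∈ Finset.range ν, kB δ β b ^ (δ + 1) ^ (i + 1) := by
        rw [Nat.cast_sum, Finset.mul_sum]
        refine Finset.sum_congr rfl fun i _ => ?_
        rw [Nat.cast_mul, e1, hBe]; push_cast; rfl
      rw [e2, ← hU, kT₀, hN0]; ring
    have h2 : U + 1 + ∑ i ∈ Finset.range ν, (2 ^ (2 * t) - 1) * 2 ^ e i = 2 ^ r := by
      exact_mod_cast h1
    omega
  rw [hUmask, land_mask hestep ν r γ hetop hγr]
  constructor
  · rintro ⟨⟨z, hz, hz'⟩, hd⟩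
    have hg' : g = 1 + ∑ i : Fin ν, ((z i.val : ℕ) : ℤ) * kB δ β b ^ (δ + 1) ^ (i.val + 1) := by
      rw [Fin.sum_univ_eq_sum_range (fun i => ((z i : ℕ) : ℤ) * kB δ β b ^ (δ + 1) ^ (i + 1)) ν]
      simp only [hBe]
      have : (γ : ℤ) = ∑ i ∈ Finset.range ν, (z i : ℤ) * 2 ^ e i := by rw [hz']; push_cast; rfl
      omega
    have hzb : ∀ i : Fin ν, ((z i.val : ℕ) : ℤ) < b ^ 2 := fun i => by
      rw [hb2]; exact_mod_cast hz i
    exact ⟨fun i => z i, hzb, hg',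
      (kappa_zero_iff hP hδ hβ hβ1 hb0 hH hab hzb hg' hK.symm).mp hd⟩
  · rintro ⟨z, hzb, hg', h0⟩
    refine ⟨⟨fun i => if hi : i < ν then z ⟨i, hi⟩ else 0, fun i => ?_, ?_⟩,
      (kappa_zero_iff hP hδ hβ hβ1 hb0 hH hab hzb hg' hK.symm).mpr h0⟩
    · dsimp only
      split_ifs with hi
      · have := hzb ⟨i, hi⟩
        rw [hb2] at this; exact_mod_cast this
      · positivity
    · rw [← Fin.sum_univ_eq_sum_range (fun i => (if hi : i < ν then z ⟨i, hi⟩ else 0) * 2 ^ e i) ν]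
      simp only [Fin.is_lt, dite_true, Fin.eta]
      have : (γ : ℤ) = ((∑ i : Fin ν, z i * 2 ^ e i : ℕ) : ℤ) := by
        push_cast
        simp only [hBe] at hg'
        omega
      exact_mod_cast this

end CodeIff

/-! ### The universal equation -/

section Final
variable {ν : ℕ}

/-- The universal polynomial expression in the parameter `a` and the eleven unknowns, over any
commutative ring so that it can be read both as a polynomial and as its values. -/
noncomputable def master {R : Type*} [CommRing R] (P : MvPolynomial (Fin (ν + 1)) ℤ) (δ β : ℕ)
    (a f g h k l w x y n u v : R) : R :=
  comb (bA₁ (kb a f) w l (kX P δ β (kb a f) a g) (kY ν δ β (kb a f)) k)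
    (bA₂ (kb a f) w l (kX P δ β (kb a f) a g) (kY ν δ β (kb a f)) h k x g (kN₀ ν δ β (kb a f)) u v)
    (bA₃ (kb a f) w l (kX P δ β (kb a f) a g) (kY ν δ β (kb a f)) h x y)
    (bS (kb a f) w l (kX P δ β (kb a f) a g) (kY ν δ β (kb a f)))
    (bT (kb a f) w l (kX P δ β (kb a f) a g) (kY ν δ β (kb a f)) h) n

/-- The left-to-right direction takes `b` to be a power of two with `b²` larger than all `z_i`. -/
theorem master_iff {P : MvPolynomial (Fin (ν + 1)) ℤ} {δ s : ℕ} (hP : P.totalDegree ≤ δ)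
    (hδ : 1 ≤ δ) (hβ : (ν + 2) ^ δ * cΔ P δ < 2 ^ s) (a : ℕ) :
    (∃ z : Fin ν → ℕ, eval (Fin.cases (a : ℤ) fun i => (z i : ℤ)) P = 0) ↔
      ∃ f g h k l w x y n u v : ℤ, master P δ (2 ^ s) (a : ℤ) f g h k l w x y n u v = 0 := by
  have hβ1 : 1 ≤ 2 ^ s := Nat.one_le_two_pow
  have hβΔ : cΔ P δ < 2 ^ s := by
    have : 1 ≤ (ν + 2) ^ δ := Nat.one_le_pow _ _ (by omega)
    nlinarith
  constructor
  · rintro ⟨z, hz⟩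
    obtain ⟨f, t, hbt, hZ⟩ := exists_kb a (∑ i, z i)
    obtain ⟨hb0, hab⟩ := kb_bounds a f
    have hbn : (kb (a : ℤ) f).natAbs = 2 ^ t := by rw [hbt]; simp [Int.natAbs_pow]
    set b := kb (a : ℤ) f with hb
    have hzb : ∀ i, (z i : ℤ) < b ^ 2 := fun i => by
      have : (z i : ℤ) ≤ ((∑ i, z i : ℕ) : ℤ) := by
        exact_mod_cast Finset.single_le_sum (f := z) (fun _ _ => Nat.zero_le _) (Finset.mem_univ i)
      omega
    obtain ⟨h1, h2, h3⟩ := kH_bounds hδ hβ1 hb0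
    have hBH : kB δ (2 ^ s) b = 2 * kH δ (2 ^ s) b := rfl
    set g : ℤ := 1 + ∑ i : Fin ν, (z i : ℤ) * kB δ (2 ^ s) b ^ (δ + 1) ^ (i.val + 1) with hg
    have hg0 : 0 < g := by
      have : 0 ≤ ∑ i : Fin ν, (z i : ℤ) * kB δ (2 ^ s) b ^ (δ + 1) ^ (i.val + 1) :=
        Finset.sum_nonneg fun i _ => mul_nonneg (by positivity) (pow_nonneg (by omega) _)
      omega
    have hgN : g < kN₀ ν δ (2 ^ s) b := by
      have hd := digits_add_two_le (by omega : 2 ≤ kB δ (2 ^ s) b) hδ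
        (z := fun i => if hi : i < ν then (z ⟨i, hi⟩ : ℤ) else 0) (fun i => by
          split_ifs with hi
          · have := hzb ⟨i, hi⟩; omega
          · omega) ν
      rw [← Fin.sum_univ_eq_sum_range (fun i => (if hi : i < ν then (z ⟨i, hi⟩ : ℤ) else 0) *
        kB δ (2 ^ s) b ^ (δ + 1) ^ (i + 1)) ν] at hd
      simp only [Fin.is_lt, dite_true, Fin.eta] at hd
      rw [kN₀, bigL]
      omega
    have hdvd := (code_iff hP hδ hβ hbn hab hg0 hgN).mpr ⟨z, hzb, hg, hz⟩
    obtain ⟨x1, x2, y4, nY⟩ := kX_bounds hδ hβΔ hb0 (by positivity) hab hg0 hgN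
    obtain ⟨X, hX⟩ := Int.eq_ofNat_of_zero_le (by omega : 0 ≤ kX P δ (2 ^ s) b a g)
    obtain ⟨Y, hY⟩ := Int.eq_ofNat_of_zero_le (by omega : 0 ≤ kY ν δ (2 ^ s) b)
    rw [hX, hY, Int.toNat_natCast, Int.toNat_natCast] at hdvd
    have ht : 2 * t ≤ 2 * X + 1 := by
      have hb2 : b ^ 2 = ((2 ^ (2 * t) : ℕ) : ℤ) := by
        rw [hbt]; push_cast; rw [← pow_mul, mul_comm]
      rw [hb2, hX] at x2
      have h4 : 2 ^ (2 * t) ≤ X + 1 := by exact_mod_cast x2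
      have h5 : 2 * t < 2 ^ (2 * t) := Nat.lt_two_pow_self
      omega
    obtain ⟨h, k, l, w, x, y, u, v, c1, c2, c3, c4⟩ :=
      bridge_complete (X := X) (Y := Y) (by omega) (by omega) hbn ht hdvd hg0 hgN (by omega)
    rw [← hX, ← hY] at c1 c2 c3 c4
    obtain ⟨n, hn⟩ := (comb_iff _ _ _ _ _ (bS_ne_zero _ _ _ _ _)).mpr ⟨c1, c2, c3, c4⟩
    exact ⟨f, g, h, k, l, w, x, y, n, u, v, hn⟩
  · rintro ⟨f, g, h, k, l, w, x, y, n, u, v, hn⟩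
    obtain ⟨c1, c2, c3, c4⟩ := (comb_iff _ _ _ _ _ (bS_ne_zero _ _ _ _ _)).mp ⟨n, hn⟩
    obtain ⟨hb0, hab⟩ := kb_bounds a f
    set b := kb (a : ℤ) f with hb
    obtain ⟨h1, h2, h3⟩ := kH_bounds hδ hβ1 hb0
    have hBH : kB δ (2 ^ s) b = 2 * kH δ (2 ^ s) b := rfl
    have hN0 : 0 < kN₀ ν δ (2 ^ s) b := pow_pos (by omega) _
    have hR : 0 < bR b w l (kX P δ (2 ^ s) b a g) (kY ν δ (2 ^ s) b) h k x g (kN₀ ν δ (2 ^ s) b) := by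
      obtain ⟨s', hs⟩ := c2
      exact (pos_iff_pell _).mpr ⟨u, v, s', hs⟩
    obtain ⟨-, -, -, hg0, hgN, -⟩ := bR_pos hN0 hR
    obtain ⟨x1, x2, y4, nY⟩ := kX_bounds hδ hβΔ hb0 (by positivity) hab hg0 hgN
    obtain ⟨X, hX⟩ := Int.eq_ofNat_of_zero_le (by omega : 0 ≤ kX P δ (2 ^ s) b a g)
    obtain ⟨Y, hY⟩ := Int.eq_ofNat_of_zero_le (by omega : 0 ≤ kY ν δ (2 ^ s) b)
    rw [hX, hY] at c1 c3 c4 hR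
    obtain ⟨⟨t, ht⟩, hd⟩ := bridge_sound (by omega) (by omega) hb0 hN0 c1 hR c3 c4
    have hd' : (kY ν δ (2 ^ s) b).toNat ∣
        (2 * (kX P δ (2 ^ s) b a g).toNat).choose (kX P δ (2 ^ s) b a g).toNat := by
      rw [hX, hY, Int.toNat_natCast, Int.toNat_natCast]; exact hd
    obtain ⟨z, -, -, hz⟩ := (code_iff hP hδ hβ ht hab hg0 hgN).mp hd'
    exact ⟨z, hz⟩

section
variable {R S : Type*} [CommRing R] [CommRing S] (φ : R →+* S)

lemma map_numerals : φ 2 = 2 ∧ φ 3 = 3 ∧ φ 4 = 4 ∧ φ 5 = 5 ∧ φ 16 = 16 :=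
  ⟨map_ofNat φ 2, map_ofNat φ 3, map_ofNat φ 4, map_ofNat φ 5, map_ofNat φ 16⟩

lemma map_kX (P : MvPolynomial (Fin (ν + 1)) ℤ) (δ β : ℕ) (b a g : R) :
    φ (kX P δ β b a g) = kX P δ β (φ b) (φ a) (φ g) := by
  simp [map_numerals φ, kX, kS, kT, kT₀, kN, kN₀, kK, kB, kH, cD]

lemma map_kY (δ β : ℕ) (b : R) : φ (kY ν δ β b) = kY ν δ β (φ b) := by
  simp [map_numerals φ, kY, kN, kB, kH]

lemma map_kN₀ (δ β : ℕ) (b : R) : φ (kN₀ ν δ β b) = kN₀ ν δ β (φ b) := by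
  simp [map_numerals φ, kN₀, kB, kH]

lemma map_kb (a f : R) : φ (kb a f) = kb (φ a) (φ f) := by simp [map_numerals φ, kb]

lemma map_bA (b w l X Y : R) : φ (bA b w l X Y) = bA (φ b) (φ w) (φ l) (φ X) (φ Y) := by
  simp [map_numerals φ, bA, bQ, bV, bW]

lemma map_bK (b w l X Y k : R) :
    φ (bK b w l X Y k) = bK (φ b) (φ w) (φ l) (φ X) (φ Y) (φ k) := by
  simp [map_numerals φ, bK, bκ, bQ, bV, bW]

lemma map_bC (b w l X Y h : R) :
    φ (bC b w l X Y h) = bC (φ b) (φ w) (φ l) (φ X) (φ Y) (φ h) := by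
  simp [map_numerals φ, bC, map_bA]

lemma map_pDFI (a B C x y : R) : φ (pDFI a B C x y) = pDFI (φ a) (φ B) (φ C) (φ x) (φ y) := by
  simp [map_numerals φ, pDFI, pD, pE, pF, pG, pH, pI]

lemma map_comb (A₁ A₂ A₃ S T n : R) :
    φ (comb A₁ A₂ A₃ S T n) = comb (φ A₁) (φ A₂) (φ A₃) (φ S) (φ T) (φ n) := by
  simp [map_numerals φ, comb, combNorm]

lemma map_master (P : MvPolynomial (Fin (ν + 1)) ℤ) (δ β : ℕ) (a f g h k l w x y n u v : R) :
    φ (master P δ β a f g h k l w x y n u v) =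
      master P δ β (φ a) (φ f) (φ g) (φ h) (φ k) (φ l) (φ w) (φ x) (φ y) (φ n) (φ u) (φ v) := by
  simp only [master, map_comb, bA₁, bA₂, bA₃, bS, bT, bR, bκ, bQ, bV, bW, map_pDFI, map_bC, map_bK,
    map_bA, map_kX, map_kY, map_kN₀, map_kb, map_add, map_sub, map_mul, map_pow, map_one, map_numerals φ]
end

end Final

/-! ### Degree bounds -/

section Degree

/-- `dle p n` says that the total degree of `p` is at most `n`. -/
def dle {σ : Type*} (p : MvPolynomial σ ℤ) (n : ℕ) : Prop := p.totalDegree ≤ n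

section
variable {σ : Type*} {p q : MvPolynomial σ ℤ} {m n : ℕ}

lemma dle.mono (h : dle p m) (hmn : m ≤ n) : dle p n := le_trans h hmn

lemma dle.add (hp : dle p m) (hq : dle q n) : dle (p + q) (max m n) :=
  (totalDegree_add p q).trans (max_le_max hp hq)

lemma dle.sub (hp : dle p m) (hq : dle q n) : dle (p - q) (max m n) :=
  (totalDegree_sub p q).trans (max_le_max hp hq)

lemma dle.mul (hp : dle p m) (hq : dle q n) : dle (p * q) (m + n) :=
  (totalDegree_mul p q).trans (add_le_add hp hq)

lemma dle.pow (hp : dle p m) (k : ℕ) : dle (p ^ k) (k * m) :=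
  (totalDegree_pow p k).trans (Nat.mul_le_mul_left _ hp)

lemma dle_X (i : σ) : dle (X i : MvPolynomial σ ℤ) 1 := (totalDegree_X i).le

lemma dle_int (c : ℤ) : dle (c : MvPolynomial σ ℤ) 0 := by
  rw [dle, ← eq_intCast (C : ℤ →+* MvPolynomial σ ℤ), totalDegree_C]

lemma dle_nat (c : ℕ) : dle (c : MvPolynomial σ ℤ) 0 := by
  have := dle_int (σ := σ) (c : ℤ)
  rwa [Int.cast_natCast] at this

lemma dle_one : dle (1 : MvPolynomial σ ℤ) 0 := by simpa using dle_nat (σ := σ) 1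

lemma dle_ofNat (c : ℕ) [c.AtLeastTwo] : dle (OfNat.ofNat c : MvPolynomial σ ℤ) 0 :=
  dle_nat c

lemma dle_sum {ι : Type*} {s : Finset ι} {F : ι → MvPolynomial σ ℤ} (h : ∀ i ∈ s, dle (F i) n) :
    dle (∑ i ∈ s, F i) n := totalDegree_finsetSum_le h

end

section
variable {σ : Type*} {ν δ β : ℕ} {b a f g : MvPolynomial σ ℤ}

lemma dle_kb (ha : dle a 1) (hf : dle f 1) : dle (kb a f) 2 := by
  rw [kb]
  exact ((((dle_ofNat 2).mul ha).add (dle_ofNat 2)).add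
    ((((dle_ofNat 4).mul ha).add (dle_ofNat 3)).mul hf)).mono (by omega)

lemma dle_kH (hb : dle b 2) : dle (kH δ β b) (4 * δ) := by
  rw [kH]
  exact ((dle_nat β).mul (hb.pow _)).mono (by omega)

lemma dle_kB (hb : dle b 2) : dle (kB δ β b) (4 * δ) := by
  rw [kB]
  exact ((dle_ofNat 2).mul (dle_kH hb)).mono (by omega)

lemma dle_kBpow (hb : dle b 2) {e n : ℕ} (he : e ≤ n) : dle (kB δ β b ^ e) (4 * δ * n) :=
  ((dle_kB hb).pow e).mono (by rw [mul_comm]; exact Nat.mul_le_mul_left _ he)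

lemma dle_kK (P : MvPolynomial (Fin (ν + 1)) ℤ) (hδ : 1 ≤ δ) (hb : dle b 2) (ha : dle a 1)
    (hg : dle g 1) : dle (kK P δ β b a g) (4 * δ * kM ν δ) := by
  have h1 : dle ((a * kB δ β b + g) ^ δ * cD P δ (kB δ β b)) (δ * (1 + 4 * δ) + 4 * δ * bigL ν δ) := by
    refine dle.mul ((((ha.mul (dle_kB hb)).add hg).mono (by omega)).pow _) ?_
    rw [cD]
    refine dle_sum fun k _ => ?_
    exact ((dle_int _).mul (dle_kBpow hb (Nat.sub_le _ _))).mono (by rw [zero_add])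
  have h2 : dle (kH δ β b * ∑ j ∈ Finset.range (kM ν δ), kB δ β b ^ j)
      (4 * δ + 4 * δ * (kM ν δ - 1)) := by
    refine (dle_kH hb).mul (dle_sum fun j hj => dle_kBpow hb ?_)
    have := Finset.mem_range.mp hj
    omega
  rw [kK]
  refine (h1.add h2).mono (max_le ?_ ?_)
  · rw [kM]
    nlinarith [Nat.zero_le (bigL ν δ * δ * δ)]
  · have : kM ν δ = (kM ν δ - 1) + 1 := by rw [kM]; omega
    conv_rhs => rw [this]
    rw [mul_add]; omega

lemma dle_kN₀ (hb : dle b 2) :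
    dle (kN₀ ν δ β b) (4 * δ * (bigL ν δ + (kM ν δ + 1))) := by
  rw [kN₀]; exact dle_kBpow hb (by omega)

lemma dle_kN (hb : dle b 2) :
    dle (kN ν δ β b) (4 * δ * (bigL ν δ + (kM ν δ + 1))) := by
  rw [kN]; exact dle_kBpow hb le_rfl

lemma dle_kS (P : MvPolynomial (Fin (ν + 1)) ℤ) (hδ : 1 ≤ δ) (hb : dle b 2) (ha : dle a 1)
    (hg : dle g 1) : dle (kS P δ β b a g) (4 * δ * (bigL ν δ + (kM ν δ + 1))) := by
  rw [kS]
  have h0 : dle (kN₀ ν δ β b) (4 * δ * bigL ν δ) := by rw [kN₀]; exact dle_kBpow hb le_rfl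
  refine ((hg.sub dle_one).add (h0.mul (dle_kK P hδ hb ha hg))).mono (max_le ?_ ?_)
  · have : 1 ≤ 4 * δ * (bigL ν δ + (kM ν δ + 1)) := Nat.mul_pos (by omega) (by omega)
    omega
  · rw [← mul_add]; exact Nat.mul_le_mul_left _ (by omega)

lemma dle_kT (hδ : 1 ≤ δ) (hb : dle b 2) :
    dle (kT ν δ β b) (4 * δ * (bigL ν δ + (kM ν δ + 1))) := by
  have h0 : dle (kN₀ ν δ β b) (4 * δ * bigL ν δ) := by rw [kN₀]; exact dle_kBpow hb le_rfl
  have h1 : dle (∑ i ∈ Finset.range ν, kB δ β b ^ (δ + 1) ^ (i + 1)) (4 * δ * bigL ν δ) := by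
    refine dle_sum fun i hi => dle_kBpow hb ?_
    rw [bigL]
    exact Nat.pow_le_pow_right (by omega) (by have := Finset.mem_range.mp hi; omega)
  have h2 : dle (kB δ β b ^ bigL ν δ) (4 * δ * bigL ν δ) := dle_kBpow hb le_rfl
  rw [kT, kT₀]
  refine (((h0.sub dle_one).sub ((((hb.pow 2).sub dle_one)).mul h1)).add
    (h0.mul (((dle_kH hb).sub dle_one).mul h2))).mono ?_
  have h3 : bigL ν δ + 1 ≤ kM ν δ := by rw [kM]; nlinarith
  have h4 : 4 * δ * (bigL ν δ + (bigL ν δ + 1)) ≤ 4 * δ * (bigL ν δ + (kM ν δ + 1)) :=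
    Nat.mul_le_mul_left _ (by omega)
  rw [mul_add, mul_add] at h4
  omega

lemma dle_kX (P : MvPolynomial (Fin (ν + 1)) ℤ) (hδ : 1 ≤ δ) (hb : dle b 2) (ha : dle a 1)
    (hg : dle g 1) : dle (kX P δ β b a g) (3 * (4 * δ * (bigL ν δ + (kM ν δ + 1)))) := by
  have hS := dle_kS (β := β) P hδ hb ha hg
  have hT := dle_kT (ν := ν) (β := β) hδ hb
  have hN := dle_kN (ν := ν) (δ := δ) (β := β) hb
  rw [kX]
  exact ((((hS.add hT).mul (hN.pow 2)).add (((hN.sub dle_one).sub hS).mul hN)).add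
    ((hN.sub dle_one).sub hT)).mono (by omega)

lemma dle_kY (hb : dle b 2) : dle (kY ν δ β b) (2 * (4 * δ * (bigL ν δ + (kM ν δ + 1)))) := by
  rw [kY]
  exact (dle_kN hb).pow 2
end

section
variable {σ : Type*} {D : ℕ} {b w l U V h k x y g N n u v : MvPolynomial σ ℤ}

lemma dle_pDFI {α γ : ℕ} {A B C x y : MvPolynomial σ ℤ} (hA : dle A α) (hB : dle B γ) (hC : dle C γ)
    (hx : dle x 1) (hy : dle y 1) : dle (pDFI A B C x y) (44 * α + 60 * γ + 16) := by
  have hD : dle (pD A C) (2 * α + 2 * γ) := by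
    rw [pD]
    exact ((((hA.pow 2).sub dle_one).mul (hC.pow 2)).add dle_one).mono (by omega)
  have hE : dle (pE A C x) (2 * α + 4 * γ + 1) := by
    rw [pE]
    exact ((((dle_ofNat 2).mul (hC.pow 2)).mul hD).mul hx).mono (by omega)
  have hF : dle (pF A C x) (6 * α + 8 * γ + 2) := by
    rw [pF]
    exact ((((hA.pow 2).sub dle_one).mul (hE.pow 2)).add dle_one).mono (by omega)
  have hG : dle (pG A C x) (12 * α + 16 * γ + 4) := by
    rw [pG]
    exact (hA.add (hF.mul (hF.sub hA))).mono (by omega)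
  have hH : dle (pH A B C x y) (6 * α + 9 * γ + 3) := by
    rw [pH]
    exact (hC.add (hF.mul ((hB.sub hC).add (((dle_ofNat 2).mul hC).mul hy)))).mono (by omega)
  have hI : dle (pI A B C x y) (36 * α + 50 * γ + 14) := by
    rw [pI]
    exact ((((hG.pow 2).sub dle_one).mul (hH.pow 2)).add dle_one).mono (by omega)
  rw [pDFI]
  exact ((hD.mul hF).mul hI).mono (by omega)

/-- The hypotheses give `A₁` and `A₂` the same degree bound `α₁`, and `W` has degree at most `2
α₁`. -/
lemma dle_comb {α₁ α₃ : ℕ} {A₁ A₂ A₃ S T n : MvPolynomial σ ℤ} {s : ℕ} (h1 : dle A₁ α₁)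
    (h2 : dle A₂ α₁) (h3 : dle A₃ α₃) (hS : dle S s) (hT : dle T (s + α₁)) (hn : dle n 1)
    (h13 : 1 ≤ α₁) : dle (comb A₁ A₂ A₃ S T n) (8 * s + 32 * α₁ + 4 * α₃) := by
  have hW : dle (3 + A₁ ^ 2 + A₂ ^ 2) (2 * α₁) :=
    (((dle_ofNat 3).add (h1.pow 2)).add (h2.pow 2)).mono (by omega)
  have hr : dle (S * n + T) (s + α₁) := ((hS.mul hn).add hT).mono (by omega)
  have hc1 : dle (S ^ 2 * A₁) (2 * s + α₁) := ((hS.pow 2).mul h1).mono (by omega)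
  have hc2 : dle (S ^ 2 * (3 + A₁ ^ 2 + A₂ ^ 2) ^ 2 * A₂) (2 * s + 5 * α₁) :=
    (((hS.pow 2).mul (hW.pow 2)).mul h2).mono (by omega)
  have hc3 : dle (S ^ 2 * (3 + A₁ ^ 2 + A₂ ^ 2) ^ 4 * A₃) (2 * s + 8 * α₁ + α₃) :=
    (((hS.pow 2).mul (hW.pow 4)).mul h3).mono (by omega)
  rw [comb, combNorm]
  have hp := ((((hr.pow 2).add hc3).sub hc1).sub hc2).mono
    (n := 2 * s + 8 * α₁ + α₃) (by omega)
  exact ((((((hp.pow 2).add (((dle_ofNat 4).mul (hr.pow 2)).mul hc3))).sub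
    (((dle_ofNat 4).mul hc1).mul hc2)).pow 2).sub
    ((((dle_ofNat 16).mul (hp.pow 2)).mul (hr.pow 2)).mul hc3)).mono (by omega)

/-- The degree of the whole system in terms of the degrees `3 D`, `2 D`, `D` of `X`, `Y` and the
bound for `g`. -/
lemma dle_system (hb : dle b 2) (hU : dle U (3 * D)) (hV : dle V (2 * D)) (hN : dle N D)
    (hw : dle w 1) (hl : dle l 1) (hh : dle h 1) (hk : dle k 1) (hx : dle x 1) (hy : dle y 1)
    (hg : dle g 1) (hn : dle n 1) (hu : dle u 1) (hv : dle v 1) :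
    dle (comb (bA₁ b w l U V k) (bA₂ b w l U V h k x g N u v) (bA₃ b w l U V h x y)
      (bS b w l U V) (bT b w l U V h) n) (7300 + 4600 * D) := by
  have hW : dle (bW b w) 5 := by
    rw [bW]; exact ((hb.pow 2).mul hw).mono (by omega)
  have hV' : dle (bV b w V) (10 + 2 * D) := by
    rw [bV]; exact (((dle_ofNat 4).mul (hW.pow 2)).mul hV).mono (by omega)
  have hQ : dle (bQ l U V) (2 + 5 * D) := by
    rw [bQ]; exact (((hl.pow 2).mul hU).mul hV).mono (by omega)
  have hA : dle (bA b w l U V) (12 + 7 * D) := by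
    rw [bA]; exact (hQ.mul (hV'.add dle_one)).mono (by omega)
  have hκ : dle (bκ b w l U V) (14 + 12 * D) := by
    rw [bκ]; exact (((dle_ofNat 2).mul (hQ.pow 2)).mul hV').mono (by omega)
  have hB : dle (2 * U + 1) (13 + 7 * D) :=
    (((dle_ofNat 2).mul hU).add dle_one).mono (by omega)
  have hC : dle (bC b w l U V h) (13 + 7 * D) := by
    rw [bC]; exact (hB.add (hh.mul (hA.sub dle_one))).mono (by omega)
  have hK : dle (bK b w l U V k) (15 + 12 * D) := by
    rw [bK]; exact ((hU.add dle_one).add (hk.mul (hκ.sub dle_one))).mono (by omega)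
  have hS : dle (bS b w l U V) (12 + 7 * D) := by
    rw [bS]; exact (((dle_ofNat 4).mul hA).sub (dle_ofNat 5)).mono (by omega)
  have hT : dle (bT b w l U V h) (12 + 7 * D + (58 + 48 * D)) := by
    rw [bT]
    exact ((((dle_ofNat 3).mul hW).mul hC).sub
      ((dle_ofNat 2).mul ((hW.pow 2).sub dle_one))).mono (by omega)
  have hR : dle (bR b w l U V h k x g N) (38 + 30 * D) := by
    rw [bR]
    exact ((((hx.pow 2).mul (hl.pow 2)).mul (hw.pow 2)).mul
      (((hg.mul (hN.sub hg)).mul (hK.pow 2)).sub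
        (((dle_ofNat 4).mul (hN.pow 2)).mul ((hC.sub ((hl.mul hV).mul hK)).pow 2)))).mono (by omega)
  have hA₁ : dle (bA₁ b w l U V k) (58 + 48 * D) := by
    rw [bA₁]
    exact ((((hκ.pow 2).sub dle_one).mul (hK.pow 2)).add dle_one).mono (by omega)
  have hA₂ : dle (bA₂ b w l U V h k x g N u v) (58 + 48 * D) := by
    rw [bA₂]
    exact (((((dle_ofNat 4).mul hR).sub (dle_ofNat 2)).mul
      (((((dle_ofNat 2).mul hu).add dle_one).mul (((dle_ofNat 3).mul hv).add dle_one)).pow 2)).add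
      dle_one).mono (by omega)
  have hA₃ : dle (bA₃ b w l U V h x y) (44 * (12 + 7 * D) + 60 * (13 + 7 * D) + 16) := by
    rw [bA₃]; exact dle_pDFI hA hB hC hx hy
  exact (dle_comb hA₁ hA₂ hA₃ hS hT hn (by omega)).mono (by omega)

end

/-- As `δ + 1 ≤ 2δ + 1`, both sides can be compared coefficient by coefficient in `δ` and `(2δ +
1) ^ (ν + 1)`. -/
lemma degree_le_eta {ν δ : ℕ} (hδ : 1 ≤ δ) :
    7300 + 4600 * (4 * δ * (bigL ν δ + (kM ν δ + 1))) ≤ eta ν δ := by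
  have h1 : bigL ν δ ≤ (2 * δ + 1) ^ (ν + 1) := Nat.pow_le_pow_left (by omega) _
  have h2 : 1 ≤ (2 * δ + 1) ^ (ν + 1) := Nat.one_le_pow _ _ (by omega)
  rw [eta, kM]
  generalize (2 * δ + 1) ^ (ν + 1) = n at *
  generalize bigL ν δ = L at *
  have e : 4 * δ * (L + ((L + 1) * (δ + 1) + 1 + 1)) =
    4 * (δ ^ 2 * L) + 8 * (δ * L) + 4 * δ ^ 2 + 12 * δ := by ring
  rw [e]
  have a1 : δ ^ 2 * L ≤ δ ^ 2 * n := Nat.mul_le_mul_left _ h1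
  have a2 : δ * L ≤ δ * n := Nat.mul_le_mul_left _ h1
  have a3 : δ ^ 2 * 1 ≤ δ ^ 2 * n := Nat.mul_le_mul_left _ h2
  nlinarith

end Degree

/-- A constant polynomial represents only `∅` or `ℕ`, whereas `{0}` is Diophantine. -/
lemma not_universal_zero (ν : ℕ) : ¬ UniversalPairN ν 0 := by
  intro h
  obtain ⟨P, hP, hA⟩ := h {0} ⟨0, X 0, fun a => by simp⟩
  obtain ⟨c, rfl⟩ : ∃ c, P = C c := ⟨_, totalDegree_eq_zero_iff_eq_C.mp (Nat.le_zero.mp hP)⟩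
  have h0 := hA 0
  have h1 := hA 1
  simp only [eval_C, exists_const] at h0 h1
  have := h1.mpr (h0.mp rfl)
  simp at this

end UniversalPair

open UniversalPair

theorem universal_pair_Z_from_N (ν δ : ℕ) (h : UniversalPairN ν δ) :
    UniversalPairZ 11 (eta ν δ) := by
  have hδ : 1 ≤ δ := by
    rcases Nat.eq_zero_or_pos δ with rfl | h0
    · exact absurd h (not_universal_zero ν)
    · exact h0
  intro A hA
  obtain ⟨P, hP, hPA⟩ := h A hA
  -- With `β = 2 ^ s` this large, all coefficients of the coding polynomial are smaller than half
  -- the base in absolute value, so the offset digits lie strictly between `0` and `B`.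
  obtain ⟨s, hs⟩ : ∃ s, (ν + 2) ^ δ * cΔ P δ < 2 ^ s := ⟨_, Nat.lt_two_pow_self⟩
  refine ⟨master P δ (2 ^ s) (X 0) (X 1) (X 2) (X 3) (X 4) (X 5) (X 6) (X 7) (X 8) (X 9) (X 10)
    (X 11), ?_, fun a => ?_⟩
  · refine le_trans ?_ (degree_le_eta (ν := ν) hδ)
    have hb := dle_kb (dle_X (0 : Fin (11 + 1))) (dle_X 1)
    exact dle_system hb (dle_kX P hδ hb (dle_X _) (dle_X _)) (dle_kY hb) (dle_kN₀ hb) (dle_X _)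
      (dle_X _) (dle_X _) (dle_X _) (dle_X _) (dle_X _) (dle_X _) (dle_X _) (dle_X _) (dle_X _)
  · rw [hPA a, master_iff hP hδ hs a]
    simp only [map_master, eval_X]
    constructor
    · rintro ⟨f, g, h, k, l, w, x, y, n, u, v, e⟩
      exact ⟨![f, g, h, k, l, w, x, y, n, u, v], e⟩
    · rintro ⟨z, e⟩
      exact ⟨z 0, z 1, z 2, z 3, z 4, z 5, z 6, z 7, z 8, z 9, z 10, e⟩
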